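/- arXiv:math/0310231 — 3 statements merged into one kernel-verified Lean document; each statement's English description precedes it below -/
import Mathlib

section
/- Every pair (Q, L), where Q is a nondegenerate quadratic form on ℝ^d and L a nonzero linear form, is equivalent (under simultaneous linear change of coordinates by g ∈ GL(d,ℝ) and independent scaling of Q and L by nonzero reals) to a pair of exactly one of the two types: (I) (x₁² + … + x_s² − x_{s+1}² − … − x_d², x_d) with 1 ≤ s ≤ d, or (II) (x₁² + … + x_s² − x_{s+1}² − … − x_{d−2}² + x_{d−1}x_d, x_d) with 0 ≤ s ≤ ⌊(d−2)/2⌋. -/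
/-- Two pairs of (quadratic form, linear form) on `ℝ^d` are equivalent if they agree up to
a linear change of coordinates `g ∈ GL(d,ℝ)` and independent nonzero scalings. -/
def PairEquiv (d : ℕ) (Q₁ L₁ Q₂ L₂ : (Fin d → ℝ) → ℝ) : Prop :=
  ∃ (lam mu : ℝ) (g : (Fin d → ℝ) ≃ₗ[ℝ] (Fin d → ℝ)), lam ≠ 0 ∧ mu ≠ 0 ∧
    ∀ x, Q₁ x = lam * Q₂ (g x) ∧ L₁ x = mu * L₂ (g x)

/-- Index set for canonical pairs: type (I) with `1 ≤ s ≤ d`, type (II) with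
`0 ≤ s ≤ ⌊(d-2)/2⌋`. -/
def CanIdx (d : ℕ) : Type :=
  {s : ℕ // 1 ≤ s ∧ s ≤ d} ⊕ {s : ℕ // s ≤ (d - 2) / 2}

/-- Canonical quadratic form of each type. -/
def canQ (d : ℕ) (c : CanIdx d) : (Fin d → ℝ) → ℝ :=
  match c with
  | Sum.inl ⟨s, _⟩ => fun x => ∑ i : Fin d, (if (i : ℕ) < s then 1 else -1) * x i ^ 2
  | Sum.inr ⟨s, _⟩ => fun x =>
      if h : 2 ≤ d then
        (∑ i : Fin d, if (i : ℕ) < s then x i ^ 2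
          else if (i : ℕ) < d - 2 then -(x i ^ 2) else 0) +
        x ⟨d - 2, by omega⟩ * x ⟨d - 1, by omega⟩
      else 0

/-- Canonical linear form `x_d`. -/
def canL (d : ℕ) : (Fin d → ℝ) → ℝ :=
  fun x => if h : 0 < d then x ⟨d - 1, by omega⟩ else 0


theorem sort_signs (n : ℕ) (w : Fin n → ℝ) :
    ∃ s ≤ n, ∃ σ : Fin n ≃ Fin n, ∀ i, w (σ i) = 1 ↔ (i : ℕ) < s := by
  classical
  let s := Fintype.card {i // w i = 1}
  have hs : s ≤ n := by
    simpa [s] using Fintype.card_subtype_le (fun i => w i = 1)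
  have hc : Fintype.card {i : Fin n // (i : ℕ) < s} = Fintype.card {i // w i = 1} := by
    rw [Fintype.card_subtype]
    change _ = s
    have := Fin.card_filter_val_lt (n := n) (m := s)
    rw [this]; simp [hs]
  let e := Fintype.equivOfCardEq hc
  refine ⟨s, hs, e.extendSubtype, fun i => ⟨fun h => ?_, fun h => ?_⟩⟩
  · by_contra hi
    exact e.extendSubtype_not_mem i hi h
  · exact e.extendSubtype_mem i h

theorem diag_form {M : Type*} [AddCommGroup M] [Module ℝ M] [FiniteDimensional ℝ M]
    (Q : QuadraticForm ℝ M) (hQ : ∀ x, (∀ y, QuadraticMap.polar Q x y = 0) → x = 0)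
    (n : ℕ) (hn : Module.finrank ℝ M = n) :
    ∃ s ≤ n, ∃ f : M →ₗ[ℝ] (Fin n → ℝ), ∀ x, Q x =
      ∑ i : Fin n, (if (i : ℕ) < s then (1 : ℝ) else -1) * f x i ^ 2 := by
  subst hn
  obtain ⟨w, hw, ⟨e⟩⟩ := QuadraticForm.equivalent_one_neg_one_weighted_sum_squared Q (by
    intro x hx
    apply hQ x
    intro y
    have := hx y
    rw [QuadraticMap.associated_apply] at this
    simp at this
    simp only [QuadraticMap.polar]; linarith)
  obtain ⟨s, hs, σ, hσ⟩ := sort_signs _ w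
  refine ⟨s, hs, LinearMap.funLeft ℝ ℝ σ ∘ₗ e.toLinearEquiv.toLinearMap, fun x => ?_⟩
  rw [← e.map_app x, QuadraticMap.weightedSumSquares_apply, ← Equiv.sum_comp σ]
  refine Finset.sum_congr rfl fun i _ => ?_
  have h1 : (LinearMap.funLeft ℝ ℝ σ ∘ₗ e.toLinearEquiv.toLinearMap) x i = e x (σ i) := rfl
  rw [h1]
  by_cases h : (i : ℕ) < s
  · rw [if_pos h, (hσ i).2 h]; simp [sq]
  · rw [if_neg h, (hw (σ i)).resolve_right (fun h' => h ((hσ i).1 h'))]; simp [sq]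

theorem pairEquiv_of_map {d : ℕ} (Q : QuadraticForm ℝ (Fin d → ℝ))
    (hQnd : ∀ x : Fin d → ℝ, (∀ y, QuadraticMap.polar Q x y = 0) → x = 0)
    (L : (Fin d → ℝ) → ℝ) (Q' L' : (Fin d → ℝ) → ℝ) (lam mu : ℝ) (hl : lam ≠ 0) (hm : mu ≠ 0)
    (g : (Fin d → ℝ) →ₗ[ℝ] (Fin d → ℝ)) (h : ∀ x, Q x = lam * Q' (g x))
    (h' : ∀ x, L x = mu * L' (g x)) :
    PairEquiv d Q L Q' L' := by
  refine ⟨lam, mu, LinearEquiv.ofInjectiveEndo g ?_, hl, hm, fun x => ⟨h x, h' x⟩⟩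
  rw [← LinearMap.ker_eq_bot, LinearMap.ker_eq_bot']
  intro x hx
  apply hQnd
  intro y
  have h0 : Q x = Q 0 := by rw [h, h, hx, map_zero]
  rw [QuadraticMap.polar, h0, h (x + y), map_add, hx, zero_add, ← h]
  simp

theorem exists_vanish {d : ℕ} (g : (Fin d → ℝ) →ₗ[ℝ] (Fin d → ℝ)) (I J : Finset (Fin d))
    (h : I.card + J.card < d) :
    ∃ x : Fin d → ℝ, x ≠ 0 ∧ (∀ i ∈ I, x i = 0) ∧ ∀ j ∈ J, g x j = 0 := by
  let F : (Fin d → ℝ) →ₗ[ℝ] ((I → ℝ) × (J → ℝ)) :=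
    (LinearMap.funLeft ℝ ℝ (fun i : I => (i : Fin d))).prod
      (LinearMap.funLeft ℝ ℝ (fun i : J => (i : Fin d)) ∘ₗ g)
  have hF : LinearMap.ker F ≠ ⊥ := by
    apply LinearMap.ker_ne_bot_of_finrank_lt
    simpa using h
  obtain ⟨x, hx, hx0⟩ := Submodule.exists_mem_ne_zero_of_ne_bot hF
  rw [LinearMap.mem_ker] at hx
  refine ⟨x, hx0, fun i hi => ?_, fun i hi => ?_⟩
  · exact congrFun (congrArg Prod.fst hx) ⟨i, hi⟩
  · exact congrFun (congrArg Prod.snd hx) ⟨i, hi⟩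

theorem exists_dual {d : ℕ} (Q : QuadraticForm ℝ (Fin d → ℝ))
    (hQnd : ∀ x : Fin d → ℝ, (∀ y, QuadraticMap.polar Q x y = 0) → x = 0)
    (L : (Fin d → ℝ) →ₗ[ℝ] ℝ) : ∃ v, ∀ y, QuadraticMap.polar Q v y = L y := by
  let B : (Fin d → ℝ) →ₗ[ℝ] Module.Dual ℝ (Fin d → ℝ) := Q.polarBilin
  have hi : Function.Injective B := by
    rw [← LinearMap.ker_eq_bot, LinearMap.ker_eq_bot']
    intro x hx
    exact hQnd x fun y => congrArg (fun f => f y) hx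
  have hs : Function.Surjective B :=
    (LinearMap.injective_iff_surjective_of_finrank_eq_finrank
      (Subspace.dual_finrank_eq).symm).1 hi
  obtain ⟨v, hv⟩ := hs L
  exact ⟨v, fun y => congrArg (fun f => f y) hv⟩

theorem pairEquiv_neg {d : ℕ} {Q Q' L L' : (Fin d → ℝ) → ℝ}
    (h : PairEquiv d (fun x => -Q x) L Q' L') : PairEquiv d Q L Q' L' := by
  obtain ⟨lam, mu, g, hl, hm, h⟩ := h
  refine ⟨-lam, mu, g, neg_ne_zero.2 hl, hm, fun x => ⟨?_, (h x).2⟩⟩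
  have := (h x).1
  simp only at this
  linarith

theorem pairEquiv_symm {d : ℕ} {Q Q' L L' : (Fin d → ℝ) → ℝ}
    (h : PairEquiv d Q L Q' L') : PairEquiv d Q' L' Q L := by
  obtain ⟨lam, mu, g, hl, hm, h⟩ := h
  refine ⟨lam⁻¹, mu⁻¹, g.symm, inv_ne_zero hl, inv_ne_zero hm, fun x => ?_⟩
  have := h (g.symm x)
  rw [this.1, this.2]
  simp [hl, hm]

theorem pairEquiv_trans {d : ℕ} {Q Q' L L' Q'' L'' : (Fin d → ℝ) → ℝ}
    (h : PairEquiv d Q L Q' L') (h' : PairEquiv d Q' L' Q'' L'') : PairEquiv d Q L Q'' L'' := by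
  obtain ⟨lam, mu, g, hl, hm, h⟩ := h
  obtain ⟨lam', mu', g', hl', hm', h'⟩ := h'
  refine ⟨lam * lam', mu * mu', g.trans g', mul_ne_zero hl hl', mul_ne_zero hm hm', fun x => ?_⟩
  rw [(h x).1, (h x).2, (h' _).1, (h' _).2]
  simp [mul_assoc]

theorem nondeg_restrict {V : Type*} [AddCommGroup V] [Module ℝ V] (Q : QuadraticForm ℝ V)
    (hQnd : ∀ x : V, (∀ y, QuadraticMap.polar Q x y = 0) → x = 0) (K : Submodule ℝ V)
    (p : V → K) (h : ∀ x ∈ K, ∀ y, QuadraticMap.polar Q x y = QuadraticMap.polar Q x (p y)) :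
    ∀ x : K, (∀ y, QuadraticMap.polar (Q.comp K.subtype) x y = 0) → x = 0 := by
  intro x hx
  apply Subtype.ext
  apply hQnd
  intro y
  rw [h x x.2 y]
  have := hx (p y)
  simpa [QuadraticMap.polar] using this

theorem exists_case_A_neg (n : ℕ) (Q : QuadraticForm ℝ (Fin (n + 2) → ℝ))
    (hQnd : ∀ x : Fin (n + 2) → ℝ, (∀ y, QuadraticMap.polar Q x y = 0) → x = 0)
    (L : (Fin (n + 2) → ℝ) →ₗ[ℝ] ℝ) (v : Fin (n + 2) → ℝ)
    (hv : ∀ y, QuadraticMap.polar Q v y = L y) (hQv : Q v < 0) :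
    ∃ c : CanIdx (n + 2), PairEquiv (n + 2) (⇑Q) (⇑L) (canQ (n + 2) c) (canL (n + 2)) := by
  have hLv : L v = 2 * Q v := by rw [← hv, QuadraticMap.polar_self]; simp
  let K := LinearMap.ker L
  let p : (Fin (n + 2) → ℝ) →ₗ[ℝ] K :=
    (LinearMap.id - ((2 * Q v)⁻¹ • L).smulRight v).codRestrict K (by
      intro x
      have : Q v ≠ 0 := hQv.ne
      simp [K, hLv]
      field_simp
      ring)
  have hp : ∀ x, (p x : Fin (n + 2) → ℝ) + ((2 * Q v)⁻¹ * L x) • v = x := by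
    intro x; simp [p]
  have hdim : Module.finrank ℝ K = n + 1 := by
    have h1 := LinearMap.finrank_range_add_finrank_ker L
    have hs : Function.Surjective L := by
      intro t
      refine ⟨(t / L v) • v, ?_⟩
      have : L v ≠ 0 := by rw [hLv]; linarith
      simp [this]
    rw [LinearMap.range_eq_top.2 hs, finrank_top] at h1
    simp at h1
    change Module.finrank ℝ (LinearMap.ker L) = _
    omega
  have hnd := nondeg_restrict Q hQnd K p (by
    intro x hx y
    conv_lhs => rw [← hp y]
    rw [QuadraticMap.polar_add_right, QuadraticMap.polar_smul_right, QuadraticMap.polar_comm Q x v,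
      hv, LinearMap.mem_ker.1 hx]
    simp)
  obtain ⟨s, hs, f, hf⟩ := diag_form _ hnd _ hdim
  have hQ : ∀ x, Q x = (∑ i : Fin (n + 1), (if (i : ℕ) < s then (1 : ℝ) else -1) * f (p x) i ^ 2)
      - ((2 * √(-Q v))⁻¹ * L x) ^ 2 := by
    intro x
    rw [← hf]
    conv_lhs => rw [← hp x]
    rw [QuadraticMap.map_add Q, QuadraticMap.polar_smul_right, QuadraticMap.polar_comm, hv,
      LinearMap.mem_ker.1 (p x).2, QuadraticMap.map_smul, mul_pow, inv_pow, mul_pow,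
      Real.sq_sqrt (by linarith)]
    have : Q v ≠ 0 := hQv.ne
    simp
    field_simp
  have hr : 0 < √(-Q v) := Real.sqrt_pos.2 (by linarith)
  let g : (Fin (n + 2) → ℝ) →ₗ[ℝ] (Fin (n + 2) → ℝ) := LinearMap.pi fun i =>
    if h : (i : ℕ) < n + 1 then LinearMap.proj ⟨i, h⟩ ∘ₗ f ∘ₗ p else (2 * √(-Q v))⁻¹ • L
  have hgl : ∀ x, g x (Fin.last (n + 1)) = (2 * √(-Q v))⁻¹ * L x := by
    intro x; simp [g]
  have hgc : ∀ x (i : Fin (n + 1)), g x i.castSucc = f (p x) i := by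
    intro x i; simp [g, Nat.le_of_lt_succ i.2]
  have hL' : ∀ x, L x = (2 * √(-Q v)) * canL (n + 2) (g x) := by
    intro x
    have : canL (n + 2) (g x) = g x (Fin.last (n + 1)) := by
      simp [canL, Fin.last]
    rw [this, hgl]
    field_simp
  by_cases hs0 : s = 0
  · refine ⟨Sum.inl ⟨n + 2, by omega, le_rfl⟩, pairEquiv_of_map Q hQnd _ _ _ (-1) _ (by norm_num)
      (by positivity) g ?_ hL'⟩
    intro x
    rw [hQ]
    simp [canQ, Fin.sum_univ_castSucc (n := n + 1), hgl, hgc, hs0]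
    ring
  · refine ⟨Sum.inl ⟨s, by omega, by omega⟩, pairEquiv_of_map Q hQnd _ _ _ 1 _ (by norm_num)
      (by positivity) g ?_ hL'⟩
    intro x
    rw [hQ]
    have : ¬ (n + 1 < s) := by omega
    simp only [canQ, Fin.sum_univ_castSucc (n := n + 1), hgl, hgc, Fin.val_castSucc, Fin.val_last,
      if_neg this]
    ring

theorem exists_case_B (n : ℕ) (Q : QuadraticForm ℝ (Fin (n + 2) → ℝ))
    (hQnd : ∀ x : Fin (n + 2) → ℝ, (∀ y, QuadraticMap.polar Q x y = 0) → x = 0)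
    (L : (Fin (n + 2) → ℝ) →ₗ[ℝ] ℝ) (hL : L ≠ 0) (v : Fin (n + 2) → ℝ)
    (hv : ∀ y, QuadraticMap.polar Q v y = L y) (hQv : Q v = 0) :
    ∃ c : CanIdx (n + 2), PairEquiv (n + 2) (⇑Q) (⇑L) (canQ (n + 2) c) (canL (n + 2)) := by
  have hLv : L v = 0 := by rw [← hv, QuadraticMap.polar_self]; simp [hQv]
  obtain ⟨w, hw1, hQw⟩ : ∃ w, L w = 1 ∧ Q w = 0 := by
    obtain ⟨u, hu⟩ : ∃ u, L u ≠ 0 := by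
      by_contra h
      push Not at h
      exact hL (LinearMap.ext h)
    obtain ⟨u', hu'⟩ : ∃ u', L u' = 1 := ⟨(L u)⁻¹ • u, by simp [hu]⟩
    refine ⟨u' + (- Q u') • v, by simp [hLv, hu'], ?_⟩
    rw [QuadraticMap.map_add Q, QuadraticMap.polar_smul_right, QuadraticMap.polar_comm, hv,
      QuadraticMap.map_smul, hQv, hu']
    simp
  let M : (Fin (n + 2) → ℝ) →ₗ[ℝ] ℝ := Q.polarBilin w
  have hM : ∀ y, QuadraticMap.polar Q w y = M y := fun y => rfl
  have hMv : M v = 1 := by rw [← hM, QuadraticMap.polar_comm, hv, hw1]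
  have hMw : M w = 0 := by rw [← hM, QuadraticMap.polar_self, hQw]; simp
  let K := LinearMap.ker (L.prod M)
  have hK : ∀ x, x ∈ K → L x = 0 ∧ M x = 0 := by
    intro x hx
    have := LinearMap.mem_ker.1 hx
    simpa using this
  let p : (Fin (n + 2) → ℝ) →ₗ[ℝ] K :=
    (LinearMap.id - L.smulRight w - M.smulRight v).codRestrict K (by
      intro x
      rw [LinearMap.mem_ker]
      simp [hLv, hw1, hMv, hMw])
  have hp : ∀ x, (p x : Fin (n + 2) → ℝ) + (L x • w + M x • v) = x := by
    intro x; simp [p]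
  have hdim : Module.finrank ℝ K = n := by
    have h1 := LinearMap.finrank_range_add_finrank_ker (L.prod M)
    have hs : Function.Surjective (L.prod M) := by
      rintro ⟨a, b⟩
      refine ⟨a • w + b • v, ?_⟩
      simp [hLv, hw1, hMv, hMw]
    rw [LinearMap.range_eq_top.2 hs, finrank_top] at h1
    simp at h1
    change Module.finrank ℝ (LinearMap.ker (L.prod M)) = _
    omega
  have hort : ∀ x ∈ K, ∀ a b : ℝ, QuadraticMap.polar Q x (a • w + b • v) = 0 := by
    intro x hx a b
    rw [QuadraticMap.polar_add_right, QuadraticMap.polar_smul_right, QuadraticMap.polar_smul_right,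
      QuadraticMap.polar_comm Q x v, QuadraticMap.polar_comm Q x w, hv, hM, (hK x hx).1,
      (hK x hx).2]
    simp
  have hnd := nondeg_restrict Q hQnd K p (by
    intro x hx y
    conv_lhs => rw [← hp y]
    rw [QuadraticMap.polar_add_right, hort x hx, add_zero])
  obtain ⟨s, hs, f, hf⟩ := diag_form _ hnd _ hdim
  have hQ : ∀ x, Q x = (∑ i : Fin n, (if (i : ℕ) < s then (1 : ℝ) else -1) * f (p x) i ^ 2)
      + M x * L x := by
    intro x
    rw [← hf]
    conv_lhs => rw [← hp x]
    rw [QuadraticMap.map_add Q, hort _ (p x).2, QuadraticMap.map_add Q, QuadraticMap.polar_smul_right,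
      QuadraticMap.polar_smul_left, hM, hMv, QuadraticMap.map_smul, QuadraticMap.map_smul,
      hQv, hQw]
    simp
  have key : ∀ (ε : ℝ) (f' : (Fin (n + 2) → ℝ) →ₗ[ℝ] (Fin n → ℝ)) (s' : ℕ) (hs' : s' ≤ n / 2),
      ε ≠ 0 → (∀ x, Q x =
        ε * ((∑ i : Fin n, (if (i : ℕ) < s' then (1 : ℝ) else -1) * f' x i ^ 2)) + M x * L x) →
      PairEquiv (n + 2) (⇑Q) (⇑L) (canQ (n + 2) (Sum.inr ⟨s', hs'⟩)) (canL (n + 2)) := by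
    intro ε f' s' hs' hε h
    let g : (Fin (n + 2) → ℝ) →ₗ[ℝ] (Fin (n + 2) → ℝ) := LinearMap.pi fun i =>
      if h : (i : ℕ) < n then LinearMap.proj ⟨i, h⟩ ∘ₗ f' else
      if (i : ℕ) = n then ε⁻¹ • M else L
    have hg1 : ∀ x (i : Fin n), g x i.castSucc.castSucc = f' x i := by
      intro x i; simp [g]
    have hg2 : ∀ x, g x ⟨n, by omega⟩ = ε⁻¹ * M x := by
      intro x; simp [g]
    have hg3 : ∀ x, g x ⟨n + 1, by omega⟩ = L x := by
      intro x; simp [g]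
    refine pairEquiv_of_map Q hQnd _ _ _ ε 1 hε one_ne_zero g ?_ ?_
    · intro x
      have h1 : ∀ i : Fin n, (if (i : ℕ) < s' then f' x i ^ 2 else -(f' x i ^ 2)) =
          (if (i : ℕ) < s' then (1 : ℝ) else -1) * f' x i ^ 2 := by
        intro i; split_ifs <;> ring
      have h2 : ¬ (n < s') := by omega
      have h3 : ¬ (n + 1 < s') := by omega
      have h4 : canQ (n + 2) (Sum.inr ⟨s', hs'⟩) (g x) =
          (∑ i : Fin n, (if (i : ℕ) < s' then (1 : ℝ) else -1) * f' x i ^ 2) +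
            (ε⁻¹ * M x) * L x := by
        simp only [canQ]
        rw [dif_pos (by omega), Fin.sum_univ_castSucc, Fin.sum_univ_castSucc]
        simp only [Nat.add_sub_cancel, Fin.val_castSucc, Fin.val_last, hg1, if_neg h2, if_neg h3,
          Fin.is_lt, if_true, h1, lt_irrefl, if_false, not_lt.2 (Nat.le_succ n)]
        rw [← hg2 x, ← hg3 x]
        simp
      rw [h4, h]
      field_simp
    · intro x
      simp [canL, hg3]
  by_cases hs2 : s ≤ n / 2
  · refine ⟨_, key 1 (f ∘ₗ p) s hs2 one_ne_zero ?_⟩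
    intro x
    simp [hQ]
  · refine ⟨_, key (-1) (LinearMap.funLeft ℝ ℝ Fin.rev ∘ₗ f ∘ₗ p) (n - s) (by omega)
      (by norm_num) ?_⟩
    intro x
    rw [hQ, ← Equiv.sum_comp Fin.revPerm, Finset.mul_sum]
    congr 1
    refine Finset.sum_congr rfl fun i _ => ?_
    have hi := i.2
    have h1 : (LinearMap.funLeft ℝ ℝ Fin.rev ∘ₗ f ∘ₗ p) x i = f (p x) (Fin.rev i) := rfl
    rw [h1, Fin.revPerm_apply, Fin.val_rev]
    by_cases h : (i : ℕ) < n - s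
    · rw [if_pos h, if_neg (by omega)]; ring
    · rw [if_neg h, if_pos (by omega)]; ring

theorem exists_can (n : ℕ) (Q : QuadraticForm ℝ (Fin (n + 2) → ℝ))
    (hQnd : ∀ x : Fin (n + 2) → ℝ, (∀ y, QuadraticMap.polar Q x y = 0) → x = 0)
    (L : (Fin (n + 2) → ℝ) →ₗ[ℝ] ℝ) (hL : L ≠ 0) :
    ∃ c : CanIdx (n + 2), PairEquiv (n + 2) (⇑Q) (⇑L) (canQ (n + 2) c) (canL (n + 2)) := by
  obtain ⟨v, hv⟩ := exists_dual Q hQnd L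
  rcases lt_trichotomy (Q v) 0 with h | h | h
  · exact exists_case_A_neg n Q hQnd L v hv h
  · exact exists_case_B n Q hQnd L hL v hv h
  · have hpol : ∀ x y, QuadraticMap.polar (-Q) x y = - QuadraticMap.polar Q x y := by
      intro x y; simp [QuadraticMap.polar]; ring
    obtain ⟨c, hc⟩ := exists_case_A_neg n (-Q)
      (fun x hx => hQnd x fun y => by have := hx y; rw [hpol] at this; linarith) L (-v)
      (fun y => by rw [hpol, QuadraticMap.polar_neg_left, neg_neg, hv]) (by simpa using h)
    exact ⟨c, pairEquiv_neg hc⟩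

theorem card_range_fin (d a b : ℕ) (hb : b ≤ d) :
    (Finset.univ.filter fun i : Fin d => a ≤ (i : ℕ) ∧ (i : ℕ) < b).card = b - a := by
  rw [← Nat.card_Ico, ← Finset.card_map Fin.valEmbedding]
  congr 1
  ext k
  simp only [Finset.mem_map, Finset.mem_filter, Finset.mem_univ, true_and, Fin.valEmbedding_apply,
    Finset.mem_Ico]
  constructor
  · rintro ⟨i, hi, rfl⟩; exact hi
  · intro hk; exact ⟨⟨k, by omega⟩, hk, rfl⟩

theorem sumsq_pos {d : ℕ} {x : Fin d → ℝ} (hx : x ≠ 0) : 0 < ∑ i, x i ^ 2 := by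
  obtain ⟨i, hi⟩ := Function.ne_iff.1 hx
  exact Finset.sum_pos' (fun _ _ => sq_nonneg _) ⟨i, Finset.mem_univ _, pow_pos_of_ne hi⟩
where
  pow_pos_of_ne {t : ℝ} (h : t ≠ 0) : 0 < t ^ 2 := by positivity

theorem canI_A {d s : ℕ} (hs : 1 ≤ s ∧ s ≤ d) {x : Fin d → ℝ}
    (h : ∀ i : Fin d, s ≤ (i : ℕ) → x i = 0) :
    canQ d (Sum.inl ⟨s, hs⟩) x = ∑ i, x i ^ 2 := by
  refine Finset.sum_congr rfl fun i _ => ?_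
  by_cases hi : (i : ℕ) < s
  · rw [if_pos hi, one_mul]
  · rw [h i (not_lt.1 hi)]; simp

theorem canI_B {d s : ℕ} (hs : 1 ≤ s ∧ s ≤ d) {x : Fin d → ℝ}
    (h : ∀ i : Fin d, (i : ℕ) < s → x i = 0) :
    canQ d (Sum.inl ⟨s, hs⟩) x = - ∑ i, x i ^ 2 := by
  rw [← Finset.sum_neg_distrib]
  refine Finset.sum_congr rfl fun i _ => ?_
  by_cases hi : (i : ℕ) < s
  · rw [h i hi]; simp
  · rw [if_neg hi]; ring

theorem canII_eq {d s : ℕ} (hd : 2 ≤ d) (hs : s ≤ (d - 2) / 2) {x : Fin d → ℝ}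
    (hl : x ⟨d - 1, by omega⟩ = 0) :
    canQ d (Sum.inr ⟨s, hs⟩) x = ∑ i : Fin d, if (i : ℕ) < s then x i ^ 2
          else if (i : ℕ) < d - 2 then -(x i ^ 2) else 0 := by
  simp only [canQ]
  rw [dif_pos hd, hl]; simp

theorem canII_A {d s : ℕ} (hd : 2 ≤ d) (hs : s ≤ (d - 2) / 2) {x : Fin d → ℝ}
    (h : ∀ i : Fin d, s ≤ (i : ℕ) → x i = 0) :
    canQ d (Sum.inr ⟨s, hs⟩) x = ∑ i, x i ^ 2 := by
  rw [canII_eq hd hs (h _ (by simp only []; omega))]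
  refine Finset.sum_congr rfl fun i _ => ?_
  by_cases hi : (i : ℕ) < s
  · rw [if_pos hi]
  · rw [h i (not_lt.1 hi)]; simp

theorem canII_B {d s : ℕ} (hd : 2 ≤ d) (hs : s ≤ (d - 2) / 2) {x : Fin d → ℝ}
    (h : ∀ i : Fin d, (i : ℕ) < s → x i = 0) (h' : ∀ i : Fin d, d - 2 ≤ (i : ℕ) → x i = 0) :
    canQ d (Sum.inr ⟨s, hs⟩) x = - ∑ i, x i ^ 2 := by
  rw [canII_eq hd hs (h' _ (by simp only []; omega)), ← Finset.sum_neg_distrib]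
  refine Finset.sum_congr rfl fun i _ => ?_
  by_cases hi : (i : ℕ) < s
  · rw [h i hi]; simp
  · rw [if_neg hi]
    by_cases hi' : (i : ℕ) < d - 2
    · rw [if_pos hi']
    · rw [h' i (not_lt.1 hi')]; simp

theorem canII_C {d s : ℕ} (hd : 2 ≤ d) (hs : s ≤ (d - 2) / 2) {x : Fin d → ℝ}
    (h : ∀ i : Fin d, (i : ℕ) < s → x i = 0) (hl : x ⟨d - 1, by omega⟩ = 0) :
    canQ d (Sum.inr ⟨s, hs⟩) x ≤ 0 := by
  rw [canII_eq hd hs hl]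
  refine Finset.sum_nonpos fun i _ => ?_
  by_cases hi : (i : ℕ) < s
  · rw [h i hi]; simp
  · rw [if_neg hi]
    split_ifs
    · nlinarith [sq_nonneg (x i)]
    · exact le_rfl

theorem canL_eq {d : ℕ} (hd : 2 ≤ d) (x : Fin d → ℝ) : canL d x = x ⟨d - 1, by omega⟩ := by
  simp only [canL]
  rw [dif_pos (by omega)]

theorem last_zero {d : ℕ} (hd : 2 ≤ d) {mu : ℝ} (hm : mu ≠ 0) {x y : Fin d → ℝ}
    (h : canL d x = mu * canL d y) (hx : x ⟨d - 1, by omega⟩ = 0) :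
    y ⟨d - 1, by omega⟩ = 0 := by
  rw [canL_eq hd, canL_eq hd, hx] at h
  rcases mul_eq_zero.1 h.symm with h | h
  · exact absurd h hm
  · exact h

theorem vanish_ranges {d : ℕ} (g : (Fin d → ℝ) ≃ₗ[ℝ] (Fin d → ℝ)) (a b a' b' : ℕ) (hb : b ≤ d)
    (hb' : b' ≤ d) (h : (b - a) + (b' - a') < d) :
    ∃ x : Fin d → ℝ, x ≠ 0 ∧ (∀ i : Fin d, a ≤ (i : ℕ) → (i : ℕ) < b → x i = 0) ∧
      ∀ i : Fin d, a' ≤ (i : ℕ) → (i : ℕ) < b' → g x i = 0 := by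
  obtain ⟨x, h0, h1, h2⟩ := exists_vanish g.toLinearMap
    (Finset.univ.filter fun i : Fin d => a ≤ (i : ℕ) ∧ (i : ℕ) < b)
    (Finset.univ.filter fun i : Fin d => a' ≤ (i : ℕ) ∧ (i : ℕ) < b')
    (by rw [card_range_fin _ _ _ hb, card_range_fin _ _ _ hb']; exact h)
  exact ⟨x, h0, fun i hi hi' => h1 i (by simp [hi, hi']), fun i hi hi' => h2 i (by simp [hi, hi'])⟩

theorem sumsq_nonneg {d : ℕ} (x : Fin d → ℝ) : 0 ≤ ∑ i, x i ^ 2 :=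
  Finset.sum_nonneg fun _ _ => sq_nonneg _

theorem I_I_pos {d s s' : ℕ} (hs : 1 ≤ s ∧ s ≤ d) (hs' : 1 ≤ s' ∧ s' ≤ d) {lam : ℝ} (hl : 0 < lam)
    (g : (Fin d → ℝ) ≃ₗ[ℝ] (Fin d → ℝ))
    (h : ∀ x, canQ d (Sum.inl ⟨s, hs⟩) x = lam * canQ d (Sum.inl ⟨s', hs'⟩) (g x)) : s ≤ s' := by
  by_contra hlt
  obtain ⟨x, h0, h1, h2⟩ := vanish_ranges g s d 0 s' le_rfl hs'.2 (by omega)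
  have := h x
  rw [canI_A hs (fun i hi => h1 i hi i.2), canI_B hs' (fun i hi => h2 i (Nat.zero_le _) hi)] at this
  have := sumsq_pos h0
  have := mul_nonneg hl.le (sumsq_nonneg (g x))
  linarith

theorem I_I_neg {d s s' : ℕ} (hd : 2 ≤ d) (hs : 1 ≤ s ∧ s ≤ d) (hs' : 1 ≤ s' ∧ s' ≤ d)
    {lam mu : ℝ} (hl : lam < 0) (hm : mu ≠ 0)
    (g : (Fin d → ℝ) ≃ₗ[ℝ] (Fin d → ℝ))
    (h : ∀ x, canQ d (Sum.inl ⟨s, hs⟩) x = lam * canQ d (Sum.inl ⟨s', hs'⟩) (g x))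
    (h' : ∀ x, canL d x = mu * canL d (g x)) : False := by
  have hA : s + s' ≤ d := by
    by_contra hlt
    obtain ⟨x, h0, h1, h2⟩ := vanish_ranges g s d s' d le_rfl le_rfl (by omega)
    have := h x
    rw [canI_A hs (fun i hi => h1 i hi i.2), canI_A hs' (fun i hi => h2 i hi i.2)] at this
    have := sumsq_pos h0
    have := mul_nonneg (neg_nonneg.2 hl.le) (sumsq_nonneg (g x))
    linarith
  have hB : s + s' + 1 ≤ d := by
    by_contra hlt
    obtain ⟨x, h0, h1, h2⟩ := vanish_ranges g s d s' (d - 1) le_rfl (by omega) (by omega)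
    have := h x
    have hgl := last_zero hd hm (h' x) (h1 _ (by simp only []; omega) (by simp only []; omega))
    rw [canI_A hs (fun i hi => h1 i hi i.2), canI_A hs' (fun i hi => by
      by_cases hi' : (i : ℕ) < d - 1
      · exact h2 i hi hi'
      · have : i = ⟨d - 1, by omega⟩ := Fin.ext (by have := i.2; simp only []; omega)
        rw [this]; exact hgl)] at this
    have := sumsq_pos h0
    have := mul_nonneg (neg_nonneg.2 hl.le) (sumsq_nonneg (g x))
    linarith
  obtain ⟨x, h0, h1, h2⟩ := vanish_ranges g 0 s 0 s' hs.2 hs'.2 (by omega)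
  have := h x
  rw [canI_B hs (fun i hi => h1 i (Nat.zero_le _) hi),
    canI_B hs' (fun i hi => h2 i (Nat.zero_le _) hi)] at this
  have := sumsq_pos h0
  have := mul_nonneg (neg_nonneg.2 hl.le) (sumsq_nonneg (g x))
  linarith

theorem II_II_pos {d s s' : ℕ} (hd : 2 ≤ d) (hs : s ≤ (d - 2) / 2) (hs' : s' ≤ (d - 2) / 2)
    {lam mu : ℝ} (hl : 0 < lam) (hm : mu ≠ 0) (g : (Fin d → ℝ) ≃ₗ[ℝ] (Fin d → ℝ))
    (h : ∀ x, canQ d (Sum.inr ⟨s, hs⟩) x = lam * canQ d (Sum.inr ⟨s', hs'⟩) (g x))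
    (h' : ∀ x, canL d x = mu * canL d (g x)) : s ≤ s' := by
  by_contra hlt
  obtain ⟨x, h0, h1, h2⟩ := vanish_ranges g s d 0 s' le_rfl (by omega) (by omega)
  have h3 := h x
  have hgl := last_zero hd hm (h' x) (h1 _ (by simp only []; omega) (by simp only []; omega))
  rw [canII_A hd hs (fun i hi => h1 i hi i.2)] at h3
  have h4 := canII_C hd hs' (fun i hi => h2 i (Nat.zero_le _) hi) hgl
  have := sumsq_pos h0
  nlinarith

theorem II_II_neg {d s s' : ℕ} (hd : 2 ≤ d) (hs : s ≤ (d - 2) / 2) (hs' : s' ≤ (d - 2) / 2)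
    {lam mu : ℝ} (hl : lam < 0) (hm : mu ≠ 0) (g : (Fin d → ℝ) ≃ₗ[ℝ] (Fin d → ℝ))
    (h : ∀ x, canQ d (Sum.inr ⟨s, hs⟩) x = lam * canQ d (Sum.inr ⟨s', hs'⟩) (g x))
    (h' : ∀ x, canL d x = mu * canL d (g x)) : s = s' := by
  by_contra hlt
  obtain ⟨x, h0, h1, h2⟩ := exists_vanish g.toLinearMap
    ((Finset.univ.filter fun i : Fin d => 0 ≤ (i : ℕ) ∧ (i : ℕ) < s) ∪
      (Finset.univ.filter fun i : Fin d => d - 2 ≤ (i : ℕ) ∧ (i : ℕ) < d))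
    (Finset.univ.filter fun i : Fin d => 0 ≤ (i : ℕ) ∧ (i : ℕ) < s')
    (by
      have h1 := Finset.card_union_le
        (Finset.univ.filter fun i : Fin d => 0 ≤ (i : ℕ) ∧ (i : ℕ) < s)
        (Finset.univ.filter fun i : Fin d => d - 2 ≤ (i : ℕ) ∧ (i : ℕ) < d)
      rw [card_range_fin d 0 s (by omega), card_range_fin d (d - 2) d le_rfl] at h1
      rw [card_range_fin d 0 s' (by omega)]
      omega)
  have h3 := h x
  have hB : ∀ i : Fin d, d - 2 ≤ (i : ℕ) → x i = 0 := fun i hi => h1 i (by simp; omega)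
  have hgl := last_zero hd hm (h' x) (hB _ (by simp only []; omega))
  rw [canII_B hd hs (fun i hi => h1 i (by simp [hi])) hB] at h3
  have h4 := canII_C hd hs' (x := g x) (fun i hi => h2 i (by simp [hi])) hgl
  have := sumsq_pos h0
  nlinarith

theorem I_II {d s s' : ℕ} (hd : 2 ≤ d) (hs : 1 ≤ s ∧ s ≤ d) (hs' : s' ≤ (d - 2) / 2)
    (hE : PairEquiv d (canQ d (Sum.inl ⟨s, hs⟩)) (canL d) (canQ d (Sum.inr ⟨s', hs'⟩)) (canL d)) :
    False := by
  obtain ⟨lam, mu, g, hl, hm, h⟩ := hE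
  let e : Fin d → ℝ := Pi.single ⟨d - 2, by omega⟩ 1
  have hel : e ⟨d - 1, by omega⟩ = 0 := by
    apply Pi.single_eq_of_ne
    intro hh
    have := congrArg Fin.val hh
    simp only [] at this
    omega
  have hinv : ∀ u : Fin d → ℝ, u ⟨d - 1, by omega⟩ = 0 →
      canQ d (Sum.inr ⟨s', hs'⟩) (e + u) = canQ d (Sum.inr ⟨s', hs'⟩) u := by
    intro u hu
    rw [canII_eq hd hs' hu, canII_eq hd hs' (by rw [Pi.add_apply, hel, hu, add_zero])]
    refine Finset.sum_congr rfl fun i _ => ?_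
    by_cases hi : (i : ℕ) = d - 2
    · rw [if_neg (by omega), if_neg (by omega), if_neg (by omega), if_neg (by omega)]
    · have : e i = 0 := by
        apply Pi.single_eq_of_ne
        intro hh
        exact hi (congrArg Fin.val hh)
      rw [Pi.add_apply, this, zero_add]
  let z := g.symm e
  have hgz : g z = e := g.apply_symm_apply e
  have hz0 : z ≠ 0 := by
    intro hz
    rw [hz, map_zero] at hgz
    have := congrFun hgz ⟨d - 2, by omega⟩
    simp [e] at this
  have hzl : z ⟨d - 1, by omega⟩ = 0 := by
    have := (h z).2
    rw [hgz, canL_eq hd, canL_eq hd, hel, mul_zero] at this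
    exact this
  have hQ : ∀ y : Fin d → ℝ, y ⟨d - 1, by omega⟩ = 0 →
      canQ d (Sum.inl ⟨s, hs⟩) (z + y) = canQ d (Sum.inl ⟨s, hs⟩) y := by
    intro y hy
    rw [(h _).1, (h _).1, map_add, hgz, hinv _ (last_zero hd hm (h y).2 hy)]
  have hz1 := hQ 0 rfl
  have hz2 := hQ (fun i => (if (i : ℕ) < s then 1 else -1) * z i) (by simp only [hzl, mul_zero])
  have e1 : canQ d (Sum.inl ⟨s, hs⟩) (0 : Fin d → ℝ) = 0 := by simp [canQ]
  have e2 : canQ d (Sum.inl ⟨s, hs⟩) (fun i => (if (i : ℕ) < s then 1 else -1) * z i) =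
      canQ d (Sum.inl ⟨s, hs⟩) z := by
    simp only [canQ]
    refine Finset.sum_congr rfl fun i _ => ?_
    split_ifs <;> ring
  have e3 : canQ d (Sum.inl ⟨s, hs⟩) (z + fun i : Fin d => (if (i : ℕ) < s then 1 else -1) * z i) =
      2 * canQ d (Sum.inl ⟨s, hs⟩) z + 2 * ∑ i, z i ^ 2 := by
    simp only [canQ, Finset.mul_sum, ← Finset.sum_add_distrib]
    refine Finset.sum_congr rfl fun i _ => ?_
    rw [Pi.add_apply]
    split_ifs <;> ring
  rw [add_zero] at hz1
  have := sumsq_pos hz0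
  linarith

theorem can_unique {d : ℕ} (hd : 2 ≤ d) (c c' : CanIdx d)
    (hE : PairEquiv d (canQ d c) (canL d) (canQ d c') (canL d)) : c = c' := by
  have hE' := pairEquiv_symm hE
  rcases c with ⟨s, hs⟩ | ⟨s, hs⟩ <;> rcases c' with ⟨s', hs'⟩ | ⟨s', hs'⟩
  · obtain ⟨lam, mu, g, hl, hm, h⟩ := hE
    obtain ⟨lam', mu', g', hl', hm', h'⟩ := hE'
    rcases lt_or_gt_of_ne hl with hl | hl
    · exact (I_I_neg hd hs hs' hl hm g (fun x => (h x).1) (fun x => (h x).2)).elim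
    rcases lt_or_gt_of_ne hl' with hl' | hl'
    · exact (I_I_neg hd hs' hs hl' hm' g' (fun x => (h' x).1) (fun x => (h' x).2)).elim
    have h1 := I_I_pos hs hs' hl g (fun x => (h x).1)
    have h2 := I_I_pos hs' hs hl' g' (fun x => (h' x).1)
    obtain rfl := le_antisymm h1 h2
    rfl
  · exact (I_II hd hs hs' hE).elim
  · exact (I_II hd hs' hs hE').elim
  · obtain ⟨lam, mu, g, hl, hm, h⟩ := hE
    obtain ⟨lam', mu', g', hl', hm', h'⟩ := hE'
    have : s = s' := by
      rcases lt_or_gt_of_ne hl with hl | hl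
      · exact II_II_neg hd hs hs' hl hm g (fun x => (h x).1) (fun x => (h x).2)
      rcases lt_or_gt_of_ne hl' with hl' | hl'
      · exact (II_II_neg hd hs' hs hl' hm' g' (fun x => (h' x).1) (fun x => (h' x).2)).symm
      exact le_antisymm (II_II_pos hd hs hs' hl hm g (fun x => (h x).1) (fun x => (h x).2))
        (II_II_pos hd hs' hs hl' hm' g' (fun x => (h' x).1) (fun x => (h' x).2))
    subst this
    rfl

/-- Every pair `(Q, L)` with `Q` a nondegenerate quadratic form and `L` a nonzero linear
form on `ℝ^d` is equivalent to exactly one canonical pair of type (I) or type (II). -/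
theorem stmt_5 (d : ℕ) (hd : 2 ≤ d)
    (Q : QuadraticForm ℝ (Fin d → ℝ))
    (hQnd : ∀ x : Fin d → ℝ, (∀ y, QuadraticMap.polar Q x y = 0) → x = 0)
    (L : (Fin d → ℝ) →ₗ[ℝ] ℝ) (hL : L ≠ 0) :
    ∃! c : CanIdx d, PairEquiv d (⇑Q) (⇑L) (canQ d c) (canL d) := by
  obtain ⟨n, rfl⟩ : ∃ n, d = n + 2 := ⟨d - 2, by omega⟩
  obtain ⟨c, hc⟩ := exists_can n Q hQnd L hL
  exact ⟨c, hc, fun c' hc' => can_unique hd c' c (pairEquiv_trans (pairEquiv_symm hc') hc)⟩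
end

section
/- Let H ⊆ SL(4,ℂ) be the unipotent group of matrices h(a,b) with rows (1,a,b,ab),(0,1,0,b),(0,0,1,a),(0,0,0,1), a,b ∈ ℂ, acting on the space ℒ of linear forms on ℂ⁴ by (h·ℓ)(x) = ℓ(h⁻¹x). Then the only nontrivial proper H-invariant subspaces of ℒ are ⟨x₄⟩, the subspaces ⟨αx₂ + βx₃, x₄⟩ for (α,β) ≠ (0,0), and ⟨x₂, x₃, x₄⟩. -/
/-- The unipotent matrices `h(a,b)`. -/
def hMat (a b : ℂ) : Matrix (Fin 4) (Fin 4) ℂ :=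
  !![1, a, b, a * b;
     0, 1, 0, b;
     0, 0, 1, a;
     0, 0, 0, 1]

/-- The coordinate linear forms on `ℂ⁴`. -/
def xcoord (i : Fin 4) : Module.Dual ℂ (Fin 4 → ℂ) :=
  LinearMap.proj i

/-- The linear form with coefficients `c`. -/
noncomputable def lform (c0 c1 c2 c3 : ℂ) : Module.Dual ℂ (Fin 4 → ℂ) :=
  c0 • xcoord 0 + c1 • xcoord 1 + c2 • xcoord 2 + c3 • xcoord 3

lemma lform_apply (c0 c1 c2 c3 : ℂ) (x : Fin 4 → ℂ) :
    lform c0 c1 c2 c3 x = c0 * x 0 + c1 * x 1 + c2 * x 2 + c3 * x 3 := by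
  simp [lform, xcoord]

lemma exists_lform (l : Module.Dual ℂ (Fin 4 → ℂ)) :
    ∃ c0 c1 c2 c3, l = lform c0 c1 c2 c3 := by
  refine ⟨l (Pi.single 0 1), l (Pi.single 1 1), l (Pi.single 2 1), l (Pi.single 3 1), ?_⟩
  apply LinearMap.pi_ext'
  intro i
  ext
  fin_cases i <;> simp [lform_apply]

lemma lform_comp (c0 c1 c2 c3 a b : ℂ) :
    (lform c0 c1 c2 c3).comp (hMat a b).mulVecLin =
      lform c0 (c1 + a * c0) (c2 + b * c0) (c3 + a * b * c0 + b * c1 + a * c2) := by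
  apply LinearMap.ext
  intro x
  simp [lform_apply, hMat, Matrix.mulVec, dotProduct, Fin.sum_univ_four]
  ring

/-- Classification of the nontrivial proper `H`-invariant subspaces of the dual of `ℂ⁴`
under the dual action `(h·ℓ)(x) = ℓ(h⁻¹x)` (note `h(a,b)⁻¹ = h(-a,-b)`). -/
theorem stmt_9 (V : Submodule ℂ (Module.Dual ℂ (Fin 4 → ℂ)))
    (hinv : ∀ (a b : ℂ), ∀ ℓ ∈ V, ℓ.comp (hMat (-a) (-b)).mulVecLin ∈ V)
    (hbot : V ≠ ⊥) (htop : V ≠ ⊤) :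
    V = Submodule.span ℂ {xcoord 3} ∨
    (∃ α β : ℂ, (α, β) ≠ (0, 0) ∧
      V = Submodule.span ℂ {α • xcoord 1 + β • xcoord 2, xcoord 3}) ∨
    V = Submodule.span ℂ {xcoord 1, xcoord 2, xcoord 3} := by
  have hA : ∀ c0 c1 c2 c3, lform c0 c1 c2 c3 ∈ V → lform 0 c0 0 c2 ∈ V := by
    intro c0 c1 c2 c3 h
    have h1 := V.sub_mem (hinv (-1) 0 _ h) h
    rw [lform_comp] at h1
    convert h1 using 1
    apply LinearMap.ext
    intro x
    simp [lform_apply]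
    ring
  have hB : ∀ c0 c1 c2 c3, lform c0 c1 c2 c3 ∈ V → lform 0 0 c0 c1 ∈ V := by
    intro c0 c1 c2 c3 h
    have h1 := V.sub_mem (hinv 0 (-1) _ h) h
    rw [lform_comp] at h1
    convert h1 using 1
    apply LinearMap.ext
    intro x
    simp [lform_apply]
    ring
  have hS : ∀ (k c0 c1 c2 c3 : ℂ), lform c0 c1 c2 c3 ∈ V →
      lform (k * c0) (k * c1) (k * c2) (k * c3) ∈ V := by
    intro k c0 c1 c2 c3 h
    convert V.smul_mem k h using 1
    apply LinearMap.ext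
    intro x
    simp [lform_apply]
    ring
  have hAdd : ∀ (c0 c1 c2 c3 d0 d1 d2 d3 : ℂ), lform c0 c1 c2 c3 ∈ V → lform d0 d1 d2 d3 ∈ V →
      lform (c0 + d0) (c1 + d1) (c2 + d2) (c3 + d3) ∈ V := by
    intro c0 c1 c2 c3 d0 d1 d2 d3 h h'
    convert V.add_mem h h' using 1
    apply LinearMap.ext
    intro x
    simp [lform_apply]
    ring
  have e3 : xcoord 3 = lform 0 0 0 1 := by simp [lform]
  have e2 : xcoord 2 = lform 0 0 1 0 := by simp [lform]
  have e1 : xcoord 1 = lform 0 1 0 0 := by simp [lform]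
  have e0 : xcoord 0 = lform 1 0 0 0 := by simp [lform]
  -- first coefficient vanishes
  have h0 : ∀ c0 c1 c2 c3, lform c0 c1 c2 c3 ∈ V → c0 = 0 := by
    intro c0 c1 c2 c3 h
    by_contra hc
    apply htop
    have m3 : lform 0 0 0 1 ∈ V := by
      have := hS c0⁻¹ _ _ _ _ (hB _ _ _ _ (hA _ _ _ _ h))
      simpa [hc] using this
    have m1 : lform 0 1 0 0 ∈ V := by
      have := hAdd _ _ _ _ _ _ _ _ (hS c0⁻¹ _ _ _ _ (hA _ _ _ _ h)) (hS (-(c0⁻¹ * c2)) _ _ _ _ m3)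
      simpa [hc] using this
    have m2 : lform 0 0 1 0 ∈ V := by
      have := hAdd _ _ _ _ _ _ _ _ (hS c0⁻¹ _ _ _ _ (hB _ _ _ _ h)) (hS (-(c0⁻¹ * c1)) _ _ _ _ m3)
      simpa [hc] using this
    have m0 : lform 1 0 0 0 ∈ V := by
      have := hS c0⁻¹ _ _ _ _ (hAdd _ _ _ _ _ _ _ _ (hAdd _ _ _ _ _ _ _ _ (hAdd _ _ _ _ _ _ _ _ h
        (hS (-c1) _ _ _ _ m1)) (hS (-c2) _ _ _ _ m2)) (hS (-c3) _ _ _ _ m3))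
      simpa [hc] using this
    rw [eq_top_iff]
    intro l _
    obtain ⟨d0, d1, d2, d3, rfl⟩ := exists_lform l
    unfold lform
    rw [e0, e1, e2, e3]
    exact V.add_mem (V.add_mem (V.add_mem (V.smul_mem _ m0) (V.smul_mem _ m1))
      (V.smul_mem _ m2)) (V.smul_mem _ m3)
  by_cases hcase : ∀ c1 c2 c3, lform 0 c1 c2 c3 ∈ V → c1 = 0 ∧ c2 = 0
  · left
    have hmul : ∀ l ∈ V, ∃ c : ℂ, l = c • xcoord 3 := by
      intro l hl
      obtain ⟨d0, d1, d2, d3, rfl⟩ := exists_lform l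
      obtain rfl := h0 _ _ _ _ hl
      obtain ⟨rfl, rfl⟩ := hcase _ _ _ hl
      exact ⟨d3, by simp [lform]⟩
    apply le_antisymm
    · intro l hl
      obtain ⟨c, rfl⟩ := hmul l hl
      exact Submodule.smul_mem _ _ (Submodule.mem_span_singleton_self _)
    · rw [Submodule.span_singleton_le_iff_mem]
      obtain ⟨l, hl, hne⟩ := V.exists_mem_ne_zero_of_ne_bot hbot
      obtain ⟨c, rfl⟩ := hmul l hl
      have hc : c ≠ 0 := by
        rintro rfl
        simp at hne
      exact (V.smul_mem_iff hc).1 hl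
  right
  push Not at hcase
  obtain ⟨α, β, γ, hm, hne⟩ := hcase
  have m3 : lform 0 0 0 1 ∈ V := by
    by_cases hα : α = 0
    · have hβ := hne hα
      simpa [hβ] using hS β⁻¹ _ _ _ _ (hA _ _ _ _ hm)
    · simpa [hα] using hS α⁻¹ _ _ _ _ (hB _ _ _ _ hm)
  have mab : lform 0 α β 0 ∈ V := by
    simpa using hAdd _ _ _ _ _ _ _ _ hm (hS (-γ) _ _ _ _ m3)
  by_cases hpar : ∀ c1 c2 c3, lform 0 c1 c2 c3 ∈ V → c1 * β = c2 * α
  · left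
    refine ⟨α, β, ?_, ?_⟩
    · intro h
      simp only [Prod.mk.injEq] at h
      exact hne h.1 h.2
    have eab : α • xcoord 1 + β • xcoord 2 = lform 0 α β 0 := by simp [lform]
    apply le_antisymm
    · intro l hl
      obtain ⟨d0, d1, d2, d3, rfl⟩ := exists_lform l
      obtain rfl := h0 _ _ _ _ hl
      have hp := hpar _ _ _ hl
      rw [Submodule.mem_span_pair]
      by_cases hα : α = 0
      · have hβ := hne hα
        subst hα
        have hd1 : d1 = 0 := by simpa [hβ] using hp
        exact ⟨d2 / β, d3, by simp [lform, hd1, smul_smul, hβ]⟩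
      · refine ⟨d1 / α, d3, ?_⟩
        have hd2 : d1 / α * β = d2 := by
          field_simp
          linear_combination hp
        simp [lform, smul_smul, hα, hd2]
    · rw [Submodule.span_le]
      rintro l (rfl | rfl)
      · rw [eab]; exact mab
      · rw [e3]; exact m3
  · right
    push Not at hpar
    obtain ⟨c1, c2, c3, hc, hdet⟩ := hpar
    have hD : c1 * β - c2 * α ≠ 0 := sub_ne_zero.2 hdet
    have mc : lform 0 c1 c2 0 ∈ V := by
      simpa using hAdd _ _ _ _ _ _ _ _ hc (hS (-c3) _ _ _ _ m3)
    have m1 : lform 0 1 0 0 ∈ V := by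
      have := hS (c1 * β - c2 * α)⁻¹ _ _ _ _
        (hAdd _ _ _ _ _ _ _ _ (hS β _ _ _ _ mc) (hS (-c2) _ _ _ _ mab))
      convert this using 1
      congr 1 <;> field_simp <;> ring
    have m2 : lform 0 0 1 0 ∈ V := by
      have := hS (c1 * β - c2 * α)⁻¹ _ _ _ _
        (hAdd _ _ _ _ _ _ _ _ (hS (-α) _ _ _ _ mc) (hS c1 _ _ _ _ mab))
      convert this using 1
      congr 1 <;> field_simp <;> ring
    apply le_antisymm
    · intro l hl
      obtain ⟨d0, d1, d2, d3, rfl⟩ := exists_lform l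
      obtain rfl := h0 _ _ _ _ hl
      rw [Submodule.mem_span_triple]
      exact ⟨d1, d2, d3, by simp [lform]⟩
    · rw [Submodule.span_le]
      rintro l (rfl | rfl | rfl)
      · rw [e1]; exact m1
      · rw [e2]; exact m2
      · rw [e3]; exact m3
end

section
/- Let Q₀ = x₁² + x₂² − x₃² − x₄² and L₀ = x₄ on ℂ⁴, and let H ⊆ SL(4,ℂ) consist of block matrices diag(A,1) with A ∈ SO(2,1,ℂ). If F is a connected semisimple algebraic subgroup of SL(4,ℂ) acting irreducibly on ℂ⁴ with H ⊊ F ⊊ SL(4,ℂ), then F = SO(S,ℂ) for some nondegenerate quadratic form S on ℂ⁴. -/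
open Matrix

/-- The index type for `ℂ⁴ = ℂ³ ⊕ ℂ`. -/
abbrev n4 : Type := Fin 3 ⊕ Fin 1

/-- The quadratic form `x₁² + x₂² − x₃²` on `ℂ³`. -/
def q3 (v : Fin 3 → ℂ) : ℂ := v 0 ^ 2 + v 1 ^ 2 - v 2 ^ 2

/-- A subgroup of `SL(4,ℂ)` is algebraic if it is the zero locus of a set of polynomials
in the matrix entries. -/
def IsAlgebraicSubgroup (F : Subgroup (Matrix.SpecialLinearGroup n4 ℂ)) : Prop :=
  ∃ P : Set (MvPolynomial (n4 × n4) ℂ), ∀ g : Matrix.SpecialLinearGroup n4 ℂ,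
    g ∈ F ↔ ∀ p ∈ P,
      MvPolynomial.eval (fun ij => (g : Matrix n4 n4 ℂ) ij.1 ij.2) p = 0

/-- A subgroup of `SL(4,ℂ)` is connected if its set of matrices is connected. -/
def IsConnectedSubgroup (F : Subgroup (Matrix.SpecialLinearGroup n4 ℂ)) : Prop :=
  IsConnected {m : Matrix n4 n4 ℂ | ∃ g ∈ F, (g : Matrix n4 n4 ℂ) = m}

/-- A subgroup is semisimple if every connected solvable normal algebraic subgroup of it
is trivial. -/
def IsSemisimpleSubgroup (F : Subgroup (Matrix.SpecialLinearGroup n4 ℂ)) : Prop :=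
  ∀ N : Subgroup (Matrix.SpecialLinearGroup n4 ℂ), N ≤ F →
    (∀ g ∈ F, ∀ x ∈ N, g * x * g⁻¹ ∈ N) →
    IsAlgebraicSubgroup N → IsConnectedSubgroup N → IsSolvable N → N = ⊥

section banach
set_option linter.unusedSectionVars false
variable {𝔸 : Type*} [NormedRing 𝔸] [NormedAlgebra ℂ 𝔸] [CompleteSpace 𝔸]
open NormedSpace Filter Topology

lemma aux_norm_exp_le [NormOneClass 𝔸] (x : 𝔸) : ‖exp x‖ ≤ Real.exp ‖x‖ := by
  rw [exp_eq_tsum (𝔸 := 𝔸) ℂ, Real.exp_eq_exp_ℝ, exp_eq_tsum (𝔸 := ℝ) ℝ]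
  refine tsum_of_norm_bounded (expSeries_summable' (𝕂 := ℝ) ‖x‖).hasSum ?_
  intro n
  rw [norm_smul]
  have : ‖((n.factorial : ℂ))⁻¹‖ = ((n.factorial : ℝ))⁻¹ := by simp
  rw [this, smul_eq_mul]
  gcongr
  exact norm_pow_le x n

lemma aux_pow_sub (A B : 𝔸) [NormOneClass 𝔸] (C : ℝ) (hA : ‖A‖ ≤ C) (hB : ‖B‖ ≤ C) (hC : 1 ≤ C) (n : ℕ) :
    ‖A ^ n - B ^ n‖ ≤ n * C ^ n * ‖A - B‖ := by
  induction n with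
  | zero => simp
  | succ n ih =>
    have h : A ^ (n+1) - B ^ (n+1) = A ^ n * (A - B) + (A ^ n - B ^ n) * B := by
      rw [pow_succ, pow_succ]; noncomm_ring
    have hC0 : 0 ≤ C := by linarith
    have h1 : ‖A ^ n * (A - B)‖ ≤ C ^ (n+1) * ‖A - B‖ := by
      calc _ ≤ ‖A ^ n‖ * ‖A - B‖ := norm_mul_le _ _
        _ ≤ C ^ (n+1) * ‖A - B‖ := by
          gcongr
          calc ‖A ^ n‖ ≤ ‖A‖ ^ n := norm_pow_le _ _
            _ ≤ C ^ n := by gcongr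
            _ ≤ C ^ (n+1) := pow_le_pow_right₀ hC (by omega)
    have h2 : ‖(A ^ n - B ^ n) * B‖ ≤ (n * C ^ n * ‖A - B‖) * C := by
      calc _ ≤ ‖A ^ n - B ^ n‖ * ‖B‖ := norm_mul_le _ _
        _ ≤ _ := by gcongr
    rw [h]
    calc _ ≤ _ := norm_add_le _ _
      _ ≤ _ := add_le_add h1 h2
      _ = _ := by push_cast; ring

lemma aux_trotter [NormOneClass 𝔸] (X Y : 𝔸) :
    Tendsto (fun n : ℕ => (exp (((n : ℂ) + 1)⁻¹ • X) * exp (((n : ℂ) + 1)⁻¹ • Y)) ^ (n+1)) atTop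
      (𝓝 (exp (X + Y))) := by
  have hd : HasDerivAt (fun s : ℂ => exp (s • X) * exp (s • Y) - exp (s • (X + Y))) 0 (0 : ℂ) := by
    have h1 := hasDerivAt_exp_smul_const X (0 : ℂ)
    have h2 := hasDerivAt_exp_smul_const Y (0 : ℂ)
    have h3 := hasDerivAt_exp_smul_const (X + Y) (0 : ℂ)
    exact HasDerivAt.congr_deriv ((h1.mul h2).sub h3) (by simp)
  have hs : Tendsto (fun n : ℕ => (((n : ℂ) + 1)⁻¹)) atTop (𝓝[≠] 0) := by
    rw [tendsto_nhdsWithin_iff]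
    constructor
    · have := tendsto_one_div_add_atTop_nhds_zero_nat (𝕜 := ℂ)
      simpa using this
    · refine Eventually.of_forall fun n => ?_
      have : (n : ℂ) + 1 ≠ 0 := by exact_mod_cast Nat.succ_ne_zero n
      simpa using this
  have hl := (hasDerivAt_iff_tendsto_slope.1 hd).comp hs
  have hl2 : Tendsto (fun n : ℕ => ((n : ℝ) + 1) *
      ‖exp (((n : ℂ) + 1)⁻¹ • X) * exp (((n : ℂ) + 1)⁻¹ • Y) - exp (((n : ℂ) + 1)⁻¹ • (X + Y))‖) atTop (𝓝 0) := by
    have := hl.norm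
    simp only [norm_zero] at this
    refine this.congr fun n => ?_
    simp only [Function.comp, slope, vsub_eq_sub, sub_zero, zero_smul, exp_zero, mul_one, sub_self, inv_inv, norm_smul]
    congr 1
    have : ((n : ℂ) + 1) = ((n + 1 : ℕ) : ℂ) := by push_cast; rfl
    rw [this, Complex.norm_natCast]; push_cast; rfl
  rw [tendsto_iff_norm_sub_tendsto_zero]
  have hl3 := hl2.const_mul (Real.exp (‖X‖ + ‖Y‖))
  rw [mul_zero] at hl3
  refine squeeze_zero (fun n => norm_nonneg _) (fun n => ?_) hl3
  have hn : ((n : ℂ) + 1) ≠ 0 := by exact_mod_cast Nat.succ_ne_zero n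
  have hnn : ‖((n : ℂ) + 1)⁻¹‖ = ((n : ℝ) + 1)⁻¹ := by
    have : ((n : ℂ) + 1) = ((n + 1 : ℕ) : ℂ) := by push_cast; rfl
    rw [norm_inv, this, Complex.norm_natCast]; push_cast; rfl
  have hE : exp (X + Y) = exp (((n : ℂ) + 1)⁻¹ • (X + Y)) ^ (n+1) := by
    have : NormedAlgebra ℚ 𝔸 := NormedAlgebra.restrictScalars ℚ ℂ 𝔸
    rw [← NormedSpace.exp_nsmul]
    congr 1
    rw [← Nat.cast_smul_eq_nsmul ℂ, smul_smul]
    push_cast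
    rw [mul_inv_cancel₀ hn, one_smul]
  rw [hE]
  set C := Real.exp ((‖X‖ + ‖Y‖) / ((n : ℝ) + 1)) with hCdef
  have hC1 : 1 ≤ C := Real.one_le_exp (by positivity)
  have hCn : C ^ (n+1) = Real.exp (‖X‖ + ‖Y‖) := by
    rw [hCdef, ← Real.exp_nat_mul]
    congr 1
    push_cast
    field_simp
  have hA : ‖exp (((n : ℂ) + 1)⁻¹ • X) * exp (((n : ℂ) + 1)⁻¹ • Y)‖ ≤ C := by
    calc _ ≤ _ := norm_mul_le _ _
      _ ≤ Real.exp ‖((n : ℂ) + 1)⁻¹ • X‖ * Real.exp ‖((n : ℂ) + 1)⁻¹ • Y‖ :=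
        mul_le_mul (aux_norm_exp_le _) (aux_norm_exp_le _) (norm_nonneg _) (Real.exp_nonneg _)
      _ = C := by
        rw [← Real.exp_add, norm_smul, norm_smul, hnn, hCdef]; congr 1; field_simp
  have hB : ‖exp (((n : ℂ) + 1)⁻¹ • (X + Y))‖ ≤ C := by
    refine (aux_norm_exp_le _).trans ?_
    rw [hCdef, norm_smul, hnn]
    apply Real.exp_le_exp.2
    rw [div_eq_inv_mul]
    gcongr
    exact norm_add_le _ _
  have := aux_pow_sub _ _ C hA hB hC1 (n+1)
  rw [hCn] at this
  refine this.trans (le_of_eq ?_)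
  push_cast; ring

lemma aux_deriv (X Y : 𝔸) :
    Tendsto (fun s : ℂ => s⁻¹ • (exp (s • X) * Y * exp (s • (-X)) - Y)) (𝓝[≠] 0) (𝓝 (X * Y - Y * X)) := by
  have h1 := hasDerivAt_exp_smul_const X (0 : ℂ)
  have h2 := hasDerivAt_exp_smul_const (-X) (0 : ℂ)
  have hd : HasDerivAt (fun s : ℂ => exp (s • X) * Y * exp (s • (-X))) (X * Y - Y * X) (0 : ℂ) := by
    exact HasDerivAt.congr_deriv ((h1.mul_const Y).mul h2) (by simp [sub_eq_add_neg])
  have hl := (hasDerivAt_iff_tendsto_slope.1 hd)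
  refine hl.congr fun s => ?_
  simp [slope]

lemma aux_exp_sq_zero (X : 𝔸) (h : X * X = 0) : exp X = 1 + X := by
  rw [exp_eq_tsum (𝔸 := 𝔸) ℂ]
  simp only
  rw [tsum_eq_sum (s := Finset.range 2)]
  · simp [Finset.sum_range_succ]
  · intro n hn
    obtain ⟨k, rfl⟩ : ∃ k, n = k + 2 := ⟨n - 2, by simp at hn; omega⟩
    rw [pow_add, pow_two, h]; simp
end banach

section lie
open NormedSpace Filter Topology
attribute [local instance] Matrix.linftyOpNormedRing Matrix.linftyOpNormedAlgebra

/-- The matrix `m` underlies an element of `F`. -/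
def InF (F : Subgroup (Matrix.SpecialLinearGroup n4 ℂ)) (m : Matrix n4 n4 ℂ) : Prop :=
  ∃ g ∈ F, (g : Matrix n4 n4 ℂ) = m

variable {F : Subgroup (Matrix.SpecialLinearGroup n4 ℂ)}

lemma InF.mul {a b : Matrix n4 n4 ℂ} (ha : InF F a) (hb : InF F b) : InF F (a * b) := by
  obtain ⟨g, hg, rfl⟩ := ha
  obtain ⟨h, hh, rfl⟩ := hb
  exact ⟨g * h, F.mul_mem hg hh, by simp⟩

lemma InF.one : InF F 1 := ⟨1, F.one_mem, by simp⟩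

lemma InF.pow {a : Matrix n4 n4 ℂ} (ha : InF F a) (n : ℕ) : InF F (a ^ n) := by
  induction n with
  | zero => simpa using InF.one
  | succ n ih => rw [pow_succ]; exact ih.mul ha

lemma InF.mem {g : Matrix.SpecialLinearGroup n4 ℂ} (h : InF F (g : Matrix n4 n4 ℂ)) : g ∈ F := by
  obtain ⟨k, hk, e⟩ := h
  have : k = g := Subtype.ext e
  exact this ▸ hk

lemma InF.closed (halg : IsAlgebraicSubgroup F) : IsClosed {m | InF F m} := by
  obtain ⟨P, hP⟩ := halg
  have : {m | InF F m} = {m : Matrix n4 n4 ℂ | m.det = 1} ∩ ⋂ p ∈ P,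
      {m : Matrix n4 n4 ℂ | MvPolynomial.eval (fun ij : n4 × n4 => m ij.1 ij.2) p = 0} := by
    ext m
    simp only [Set.mem_ofPred_eq, Set.mem_inter_iff, Set.mem_iInter]
    constructor
    · rintro ⟨g, hg, rfl⟩
      exact ⟨g.2, (hP g).1 hg⟩
    · rintro ⟨h1, h2⟩
      exact ⟨⟨m, h1⟩, (hP ⟨m, h1⟩).2 h2, rfl⟩
  rw [this]
  refine IsClosed.inter (isClosed_eq (Continuous.matrix_det continuous_id) continuous_const) ?_
  refine isClosed_biInter fun p _ => isClosed_eq ?_ continuous_const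
  refine (MvPolynomial.continuous_eval p).comp ?_
  fun_prop

lemma exists_lie (halg : IsAlgebraicSubgroup F) : ∃ f : Submodule ℂ (Matrix n4 n4 ℂ),
    (∀ X, X ∈ f ↔ X.trace = 0 ∧ ∀ t : ℂ, InF F (exp (t • X))) ∧
    (∀ g ∈ F, ∀ X ∈ f, (g : Matrix n4 n4 ℂ) * X * ((g⁻¹ : Matrix.SpecialLinearGroup n4 ℂ) : Matrix n4 n4 ℂ) ∈ f) ∧
    (∀ X ∈ f, ∀ Y ∈ f, X * Y - Y * X ∈ f) := by
  let f : Submodule ℂ (Matrix n4 n4 ℂ) :=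
    { carrier := {X | X.trace = 0 ∧ ∀ t : ℂ, InF F (exp (t • X))}
      zero_mem' := ⟨by simp, fun t => by simpa [exp_zero] using InF.one⟩
      smul_mem' := by
        rintro c X ⟨h1, h2⟩
        exact ⟨by simp [h1], fun t => by rw [smul_smul]; exact h2 _⟩
      add_mem' := by
        rintro X Y ⟨h1, h2⟩ ⟨h3, h4⟩
        refine ⟨by simp [h1, h3], fun t => ?_⟩
        rw [smul_add]
        refine (InF.closed halg).mem_of_tendsto (aux_trotter (t • X) (t • Y)) (Eventually.of_forall fun n => ?_)
        refine InF.pow (InF.mul ?_ ?_) _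
        · rw [smul_smul]; exact h2 _
        · rw [smul_smul]; exact h4 _ }
  have hf : ∀ X, X ∈ f ↔ X.trace = 0 ∧ ∀ t : ℂ, InF F (exp (t • X)) := fun X => Iff.rfl
  have hconj : ∀ g ∈ F, ∀ X ∈ f, (g : Matrix n4 n4 ℂ) * X * ((g⁻¹ : Matrix.SpecialLinearGroup n4 ℂ) : Matrix n4 n4 ℂ) ∈ f := by
    rintro g hg X ⟨h1, h2⟩
    have hg1 : ((g⁻¹ : Matrix.SpecialLinearGroup n4 ℂ) : Matrix n4 n4 ℂ) * (g : Matrix n4 n4 ℂ) = 1 := by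
      rw [← Matrix.SpecialLinearGroup.coe_mul]; simp
    have hg2 : (g : Matrix n4 n4 ℂ) * ((g⁻¹ : Matrix.SpecialLinearGroup n4 ℂ) : Matrix n4 n4 ℂ) = 1 := by
      rw [← Matrix.SpecialLinearGroup.coe_mul]; simp
    refine ⟨?_, fun t => ?_⟩
    · rw [Matrix.trace_mul_comm, ← mul_assoc, hg1, one_mul, h1]
    · let U : (Matrix n4 n4 ℂ)ˣ := ⟨_, _, hg2, hg1⟩
      have := Matrix.exp_units_conj U (t • X)
      have e : t • ((g : Matrix n4 n4 ℂ) * X * ((g⁻¹ : Matrix.SpecialLinearGroup n4 ℂ) : Matrix n4 n4 ℂ)) =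
        (U : Matrix n4 n4 ℂ) * (t • X) * ((U⁻¹ : (Matrix n4 n4 ℂ)ˣ) : Matrix n4 n4 ℂ) := by
        simp [U]
      rw [e, this]
      exact (InF.mul ⟨g, hg, rfl⟩ (h2 t)).mul ⟨g⁻¹, F.inv_mem hg, rfl⟩
  refine ⟨f, hf, hconj, ?_⟩
  intro X hX Y hY
  have hc : IsClosed (f : Set (Matrix n4 n4 ℂ)) := f.closed_of_finiteDimensional
  refine hc.mem_of_tendsto (aux_deriv X Y) (Eventually.of_forall fun s => ?_)
  refine f.smul_mem _ (f.sub_mem ?_ hY)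
  obtain ⟨g, hg, e⟩ := ((hf X).1 hX).2 s
  have e2 : ((g⁻¹ : Matrix.SpecialLinearGroup n4 ℂ) : Matrix n4 n4 ℂ) = exp (s • (-X)) := by
    have h : exp (s • X) * exp (s • (-X)) = 1 := by
      rw [← Matrix.exp_add_of_commute]
      · simp [exp_zero]
      · simp
    have hg1 : ((g⁻¹ : Matrix.SpecialLinearGroup n4 ℂ) : Matrix n4 n4 ℂ) * (g : Matrix n4 n4 ℂ) = 1 := by
      rw [← Matrix.SpecialLinearGroup.coe_mul]; simp
    rw [← e] at h
    exact left_inv_eq_right_inv hg1 h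
  have := hconj g hg Y hY
  rwa [e, e2] at this

/-- The matrix of `q3`. -/
def J3 : Matrix (Fin 3) (Fin 3) ℂ := !![1,0,0;0,1,0;0,0,-1]

lemma q3_of_J3 (A : Matrix (Fin 3) (Fin 3) ℂ) (h : Aᵀ * J3 * A = J3) (v : Fin 3 → ℂ) :
    q3 (A.mulVec v) = q3 v := by
  have hq : ∀ v, q3 v = v ⬝ᵥ (J3 *ᵥ v) := by
    intro v
    simp [q3, J3, dotProduct, Matrix.mulVec, Fin.sum_univ_three]; ring
  have h2 : v ⬝ᵥ (J3 *ᵥ v) = v ⬝ᵥ ((Aᵀ * J3 * A) *ᵥ v) := by rw [h]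
  rw [hq, hq v, h2]
  simp only [← Matrix.mulVec_mulVec]
  rw [Matrix.dotProduct_mulVec v, Matrix.vecMul_transpose]

lemma exp_block (K : Matrix (Fin 3) (Fin 3) ℂ) :
    exp (fromBlocks K 0 0 (0 : Matrix (Fin 1) (Fin 1) ℂ)) = fromBlocks (exp K) 0 0 1 := by
  let φ : Matrix (Fin 3) (Fin 3) ℂ →+ Matrix n4 n4 ℂ :=
    { toFun := fun p => fromBlocks p 0 0 0
      map_zero' := by simp
      map_add' := by intro a b; simp [fromBlocks_add] }
  have hφ : Continuous φ := by
    change Continuous fun p : (Matrix (Fin 3) (Fin 3) ℂ) => fromBlocks p 0 0 0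
    exact Continuous.matrix_fromBlocks continuous_id continuous_const continuous_const continuous_const
  have h1 := (exp_series_hasSum_exp' (𝕂 := ℂ) K).map φ hφ
  have h2 := hasSum_ite_eq (0 : ℕ) (fromBlocks 0 0 0 1 : Matrix n4 n4 ℂ)
  have h3 := h1.add h2
  have h4 := exp_series_hasSum_exp' (𝕂 := ℂ) (fromBlocks K 0 0 0 : Matrix n4 n4 ℂ)
  have e1 : φ (exp K) + fromBlocks 0 0 0 1 = fromBlocks (exp K) 0 0 1 := by
    change fromBlocks _ _ _ _ + _ = _
    simp [fromBlocks_add]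
  refine (h4.unique ?_).trans e1
  refine HasSum.congr_fun h3 ?_
  intro n
  have hp : ∀ n : ℕ, (fromBlocks K 0 0 0 : Matrix n4 n4 ℂ) ^ (n + 1) = fromBlocks (K ^ (n+1)) 0 0 0 := by
    intro n
    induction n with
    | zero => simp
    | succ n ih => rw [pow_succ, ih, fromBlocks_multiply]; simp [pow_succ]
  change _ = fromBlocks _ _ _ _ + _
  cases n with
  | zero => simp [fromBlocks_add]
  | succ n => rw [hp]; simp [fromBlocks_smul]

lemma lie_h {f : Submodule ℂ (Matrix n4 n4 ℂ)}
    (hf : ∀ X, X ∈ f ↔ X.trace = 0 ∧ ∀ t : ℂ, InF F (exp (t • X)))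
    (hH : ∀ A : Matrix (Fin 3) (Fin 3) ℂ, A.det = 1 → Aᵀ * J3 * A = J3 → InF F (fromBlocks A 0 0 1))
    (K : Matrix (Fin 3) (Fin 3) ℂ) (hK0 : K.trace = 0) (hK : Kᵀ * J3 + J3 * K = 0) : fromBlocks K 0 0 0 ∈ f := by
  rw [hf]
  refine ⟨by simpa [Matrix.trace, Fintype.sum_sum_type] using hK0, fun t => ?_⟩
  have hJ : J3 * J3 = 1 := by
    ext i j; fin_cases i <;> fin_cases j <;> simp [J3, Matrix.mul_apply, Fin.sum_univ_three]
  have key : ∀ t : ℂ, (exp (t • K))ᵀ * J3 * exp (t • K) = J3 := by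
    intro t
    have h1 : Kᵀ = J3 * (-K) * J3 := by
      have : Kᵀ * J3 = J3 * (-K) := by
        rw [mul_neg]; exact eq_neg_of_add_eq_zero_left hK
      rw [← this, mul_assoc, hJ, mul_one]
    let U : (Matrix (Fin 3) (Fin 3) ℂ)ˣ := ⟨J3, J3, hJ, hJ⟩
    have h2 := Matrix.exp_units_conj U (-(t • K))
    have h3 : (exp (t • K))ᵀ = J3 * exp (-(t • K)) * J3 := by
      rw [← Matrix.exp_transpose, Matrix.transpose_smul, h1]
      have : t • (J3 * -K * J3) = (U : Matrix (Fin 3) (Fin 3) ℂ) * (-(t • K)) * ((U⁻¹ : (Matrix (Fin 3) (Fin 3) ℂ)ˣ) : Matrix (Fin 3) (Fin 3) ℂ) := by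
        simp [U]
      rw [this, h2]; rfl
    have h4 : exp (-(t • K)) * exp (t • K) = 1 := by
      rw [← Matrix.exp_add_of_commute]
      · simp [exp_zero]
      · simp
    rw [h3, mul_assoc _ J3 J3, hJ, mul_one, mul_assoc, h4, mul_one]
  have e : t • (fromBlocks K 0 0 0 : Matrix n4 n4 ℂ) = fromBlocks (t • K) 0 0 0 := by
    simp [fromBlocks_smul]
  rw [e, exp_block]
  refine hH _ ?_ (key t)
  have h5 : exp (t • K) = exp ((t/2) • K) * exp ((t/2) • K) := by
    rw [← Matrix.exp_add_of_commute _ _ (Commute.refl _), ← add_smul, add_halves]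
  have h6 := congrArg Matrix.det (key (t/2))
  have hd : J3.det ≠ 0 := by simp [J3, Matrix.det_fin_three]
  rw [Matrix.det_mul, Matrix.det_mul, Matrix.det_transpose] at h6
  rw [h5, Matrix.det_mul]
  apply mul_right_cancel₀ hd
  linear_combination h6
end lie

section alg
variable {F : Subgroup (Matrix.SpecialLinearGroup n4 ℂ)} {f : Submodule ℂ (Matrix n4 n4 ℂ)}

/-- The element `α E₃₄ + β E₄₃`. -/
def zmat (α β : ℂ) : Matrix n4 n4 ℂ := fromBlocks 0 !![0;0;α] !![0,0,β] 0

lemma InF.conj (hconj : ∀ g ∈ F, ∀ X ∈ f, (g : Matrix n4 n4 ℂ) * X * ((g⁻¹ : Matrix.SpecialLinearGroup n4 ℂ) : Matrix n4 n4 ℂ) ∈ f)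
    {A B X : Matrix n4 n4 ℂ} (hA : InF F A) (hAB : A * B = 1) (hX : X ∈ f) : A * X * B ∈ f := by
  obtain ⟨g, hg, rfl⟩ := hA
  have hg1 : ((g⁻¹ : Matrix.SpecialLinearGroup n4 ℂ) : Matrix n4 n4 ℂ) * (g : Matrix n4 n4 ℂ) = 1 := by
    rw [← Matrix.SpecialLinearGroup.coe_mul]; simp
  rw [← left_inv_eq_right_inv hg1 hAB]
  exact hconj g hg X hX

lemma conjH (hconj : ∀ g ∈ F, ∀ X ∈ f, (g : Matrix n4 n4 ℂ) * X * ((g⁻¹ : Matrix.SpecialLinearGroup n4 ℂ) : Matrix n4 n4 ℂ) ∈ f)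
    (hH : ∀ A : Matrix (Fin 3) (Fin 3) ℂ, A.det = 1 → Aᵀ * J3 * A = J3 → InF F (fromBlocks A 0 0 1))
    (A B : Matrix (Fin 3) (Fin 3) ℂ) (h1 : A.det = 1) (h2 : Aᵀ * J3 * A = J3) (h3 : A * B = 1)
    {P : Matrix (Fin 3) (Fin 3) ℂ} {b : Matrix (Fin 3) (Fin 1) ℂ} {c : Matrix (Fin 1) (Fin 3) ℂ}
    {d : Matrix (Fin 1) (Fin 1) ℂ} (hX : fromBlocks P b c d ∈ f) :
    fromBlocks (A * P * B) (A * b) (c * B) d ∈ f := by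
  have := InF.conj hconj (hH A h1 h2) (B := fromBlocks B 0 0 1) (by simp [fromBlocks_multiply, h3]) hX
  simpa [fromBlocks_multiply] using this

lemma proj3 (hconj : ∀ g ∈ F, ∀ X ∈ f, (g : Matrix n4 n4 ℂ) * X * ((g⁻¹ : Matrix.SpecialLinearGroup n4 ℂ) : Matrix n4 n4 ℂ) ∈ f)
    (hH : ∀ A : Matrix (Fin 3) (Fin 3) ℂ, A.det = 1 → Aᵀ * J3 * A = J3 → InF F (fromBlocks A 0 0 1))
    (hK : ∀ K : Matrix (Fin 3) (Fin 3) ℂ, K.trace = 0 → Kᵀ * J3 + J3 * K = 0 → fromBlocks K 0 0 0 ∈ f)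
    {P : Matrix (Fin 3) (Fin 3) ℂ} {b : Matrix (Fin 3) (Fin 1) ℂ} {c : Matrix (Fin 1) (Fin 3) ℂ}
    {d : Matrix (Fin 1) (Fin 1) ℂ} (hX : fromBlocks P b c d ∈ f) :
    zmat (b 2 0) (c 0 2) ∈ f := by
  have hD := conjH hconj hH !![-1,0,0;0,1,0;0,0,-1] !![-1,0,0;0,1,0;0,0,-1]
    (by simp [Matrix.det_fin_three])
    (by ext i j; fin_cases i <;> fin_cases j <;> simp [J3, Matrix.mul_apply, Fin.sum_univ_three])
    (by ext i j; fin_cases i <;> fin_cases j <;> simp [Matrix.mul_apply, Fin.sum_univ_three]) hX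
  have hY := f.sub_mem hX hD
  rw [sub_eq_add_neg, fromBlocks_neg, fromBlocks_add] at hY
  have hR := fun {P b c d} hX => conjH hconj hH !![0,-1,0;1,0,0;0,0,1] !![0,1,0;-1,0,0;0,0,1]
    (by simp [Matrix.det_fin_three])
    (by ext i j; fin_cases i <;> fin_cases j <;> simp [J3, Matrix.mul_apply, Fin.sum_univ_three])
    (by ext i j; fin_cases i <;> fin_cases j <;> simp [Matrix.mul_apply, Fin.sum_univ_three]) (P := P) (b := b) (c := c) (d := d) hX
  have hY1 := hR hY
  have hY2 := hR hY1
  have hY3 := hR hY2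
  have hk := hK !![0,-1,0;1,0,0;0,0,0] (by simp [Matrix.trace, Fin.sum_univ_three])
    (by ext i j; fin_cases i <;> fin_cases j <;> simp [J3, Matrix.mul_apply, Fin.sum_univ_three])
  have := f.smul_mem (1/8 : ℂ) (f.add_mem (f.add_mem (f.add_mem hY hY1) (f.add_mem hY2 hY3)) (f.smul_mem (-4 * (P 1 0 - P 0 1)) hk))
  convert this using 1
  rw [zmat]
  simp only [fromBlocks_add, fromBlocks_smul]
  congr 1
  · ext i j; fin_cases i <;> fin_cases j <;> simp only [Matrix.smul_apply, Matrix.add_apply, Matrix.neg_apply, Matrix.mul_apply, Fin.sum_univ_three] <;> simp <;> ring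
  · ext i j; fin_cases i <;> fin_cases j <;> simp only [Matrix.smul_apply, Matrix.add_apply, Matrix.neg_apply, Matrix.mul_apply, Fin.sum_univ_three] <;> simp <;> ring
  · ext i j; fin_cases i <;> fin_cases j <;> simp only [Matrix.smul_apply, Matrix.add_apply, Matrix.neg_apply, Matrix.mul_apply, Fin.sum_univ_three] <;> simp <;> ring
  · ext i j; fin_cases i <;> fin_cases j <;> simp

lemma proj1 (hconj : ∀ g ∈ F, ∀ X ∈ f, (g : Matrix n4 n4 ℂ) * X * ((g⁻¹ : Matrix.SpecialLinearGroup n4 ℂ) : Matrix n4 n4 ℂ) ∈ f)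
    (hH : ∀ A : Matrix (Fin 3) (Fin 3) ℂ, A.det = 1 → Aᵀ * J3 * A = J3 → InF F (fromBlocks A 0 0 1))
    (hK : ∀ K : Matrix (Fin 3) (Fin 3) ℂ, K.trace = 0 → Kᵀ * J3 + J3 * K = 0 → fromBlocks K 0 0 0 ∈ f)
    {P : Matrix (Fin 3) (Fin 3) ℂ} {b : Matrix (Fin 3) (Fin 1) ℂ} {c : Matrix (Fin 1) (Fin 3) ℂ}
    {d : Matrix (Fin 1) (Fin 1) ℂ} (hX : fromBlocks P b c d ∈ f) :
    zmat (b 0 0) (-c 0 0) ∈ f := by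
  have hD := conjH hconj hH !![0,0,Complex.I;0,1,0;Complex.I,0,0] !![0,0,-Complex.I;0,1,0;-Complex.I,0,0]
    (by simp [Matrix.det_fin_three])
    (by ext i j; fin_cases i <;> fin_cases j <;> simp [J3, Matrix.mul_apply, Fin.sum_univ_three])
    (by ext i j; fin_cases i <;> fin_cases j <;> simp [Matrix.mul_apply, Fin.sum_univ_three]) hX
  have h2 := f.smul_mem (-Complex.I) (proj3 hconj hH hK hD)
  convert h2 using 1
  simp only [zmat, fromBlocks_smul]
  congr 1
  · simp
  · ext i j; fin_cases i <;> fin_cases j <;> simp [Matrix.mul_apply, Fin.sum_univ_three, ← mul_assoc]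
  · ext i j; fin_cases i <;> fin_cases j <;> simp [Matrix.mul_apply, Fin.sum_univ_three]
    linear_combination (-(c 0 0)) * Complex.I_mul_I
  · simp

lemma proj2 (hconj : ∀ g ∈ F, ∀ X ∈ f, (g : Matrix n4 n4 ℂ) * X * ((g⁻¹ : Matrix.SpecialLinearGroup n4 ℂ) : Matrix n4 n4 ℂ) ∈ f)
    (hH : ∀ A : Matrix (Fin 3) (Fin 3) ℂ, A.det = 1 → Aᵀ * J3 * A = J3 → InF F (fromBlocks A 0 0 1))
    (hK : ∀ K : Matrix (Fin 3) (Fin 3) ℂ, K.trace = 0 → Kᵀ * J3 + J3 * K = 0 → fromBlocks K 0 0 0 ∈ f)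
    {P : Matrix (Fin 3) (Fin 3) ℂ} {b : Matrix (Fin 3) (Fin 1) ℂ} {c : Matrix (Fin 1) (Fin 3) ℂ}
    {d : Matrix (Fin 1) (Fin 1) ℂ} (hX : fromBlocks P b c d ∈ f) :
    zmat (b 1 0) (-c 0 1) ∈ f := by
  have hD := conjH hconj hH !![0,-1,0;1,0,0;0,0,1] !![0,1,0;-1,0,0;0,0,1]
    (by simp [Matrix.det_fin_three])
    (by ext i j; fin_cases i <;> fin_cases j <;> simp [J3, Matrix.mul_apply, Fin.sum_univ_three])
    (by ext i j; fin_cases i <;> fin_cases j <;> simp [Matrix.mul_apply, Fin.sum_univ_three]) hX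
  have h2 := f.smul_mem (-1 : ℂ) (proj1 hconj hH hK hD)
  convert h2 using 1
  simp only [zmat, fromBlocks_smul]
  congr 1
  · simp
  · ext i j; fin_cases i <;> fin_cases j <;> simp [Matrix.mul_apply, Fin.sum_univ_three]
  · ext i j; fin_cases i <;> fin_cases j <;> simp [Matrix.mul_apply, Fin.sum_univ_three]
  · simp

lemma unproj1 (hconj : ∀ g ∈ F, ∀ X ∈ f, (g : Matrix n4 n4 ℂ) * X * ((g⁻¹ : Matrix.SpecialLinearGroup n4 ℂ) : Matrix n4 n4 ℂ) ∈ f)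
    (hH : ∀ A : Matrix (Fin 3) (Fin 3) ℂ, A.det = 1 → Aᵀ * J3 * A = J3 → InF F (fromBlocks A 0 0 1))
    {α β : ℂ} (h : zmat α β ∈ f) : fromBlocks 0 !![α;0;0] !![-β,0,0] 0 ∈ f := by
  have hD := conjH hconj hH !![0,0,Complex.I;0,1,0;Complex.I,0,0] !![0,0,-Complex.I;0,1,0;-Complex.I,0,0]
    (by simp [Matrix.det_fin_three])
    (by ext i j; fin_cases i <;> fin_cases j <;> simp [J3, Matrix.mul_apply, Fin.sum_univ_three])
    (by ext i j; fin_cases i <;> fin_cases j <;> simp [Matrix.mul_apply, Fin.sum_univ_three]) h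
  have h2 := f.smul_mem (-Complex.I) hD
  convert h2 using 1
  simp only [fromBlocks_smul]
  congr 1
  · simp
  · ext i j; fin_cases i <;> fin_cases j <;> simp [Matrix.mul_apply, Fin.sum_univ_three, ← mul_assoc]
  · ext i j; fin_cases i <;> fin_cases j <;> simp [Matrix.mul_apply, Fin.sum_univ_three, mul_left_comm]
  · simp

lemma unproj2 (hconj : ∀ g ∈ F, ∀ X ∈ f, (g : Matrix n4 n4 ℂ) * X * ((g⁻¹ : Matrix.SpecialLinearGroup n4 ℂ) : Matrix n4 n4 ℂ) ∈ f)
    (hH : ∀ A : Matrix (Fin 3) (Fin 3) ℂ, A.det = 1 → Aᵀ * J3 * A = J3 → InF F (fromBlocks A 0 0 1))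
    {α β : ℂ} (h : zmat α β ∈ f) : fromBlocks 0 !![0;α;0] !![0,-β,0] 0 ∈ f := by
  have hD := conjH hconj hH !![0,-1,0;1,0,0;0,0,1] !![0,1,0;-1,0,0;0,0,1]
    (by simp [Matrix.det_fin_three])
    (by ext i j; fin_cases i <;> fin_cases j <;> simp [J3, Matrix.mul_apply, Fin.sum_univ_three])
    (by ext i j; fin_cases i <;> fin_cases j <;> simp [Matrix.mul_apply, Fin.sum_univ_three]) (unproj1 hconj hH h)
  convert hD using 1
  congr 1
  · simp
  · ext i j; fin_cases i <;> fin_cases j <;> simp [Matrix.mul_apply, Fin.sum_univ_three]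
  · ext i j; fin_cases i <;> fin_cases j <;> simp [Matrix.mul_apply, Fin.sum_univ_three]

lemma zmat_add (a b c d : ℂ) : zmat a b + zmat c d = zmat (a+c) (b+d) := by
  simp [zmat, fromBlocks_add]
lemma zmat_smul (t a b : ℂ) : t • zmat a b = zmat (t*a) (t*b) := by
  simp [zmat, fromBlocks_smul]

lemma trichotomy (f : Submodule ℂ (Matrix n4 n4 ℂ)) :
    (∀ α β, zmat α β ∈ f → α = 0) ∨ (∀ α β, zmat α β ∈ f → β = 0) ∨ (zmat 1 0 ∈ f ∧ zmat 0 1 ∈ f) ∨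
    ∃ ω : ℂ, ω ≠ 0 ∧ zmat (ω^2) 1 ∈ f ∧ ∀ α β, zmat α β ∈ f → α = ω^2 * β := by
  by_cases ha : ∀ α β, zmat α β ∈ f → α = 0
  · exact Or.inl ha
  by_cases hb : ∀ α β, zmat α β ∈ f → β = 0
  · exact Or.inr (Or.inl hb)
  right; right
  push Not at ha hb
  obtain ⟨α, β, h1, h2⟩ := ha
  obtain ⟨α', β', h3, h4⟩ := hb
  have h5 : zmat (β'⁻¹ * α') 1 ∈ f := by
    have := f.smul_mem β'⁻¹ h3
    rwa [zmat_smul, inv_mul_cancel₀ h4] at this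
  have hsub : ∀ {κ a b : ℂ}, zmat κ 1 ∈ f → zmat a b ∈ f → a - κ * b ≠ 0 → zmat 1 0 ∈ f := by
    intro κ a b hk hab hne
    have := f.smul_mem (a - κ * b)⁻¹ (f.add_mem hab (f.smul_mem (-b) hk))
    rw [zmat_smul, zmat_add, zmat_smul] at this
    convert this using 2
    · field_simp; ring
    · ring
  by_cases h0 : zmat 1 0 ∈ f
  · left
    refine ⟨h0, ?_⟩
    have := f.add_mem h5 (f.smul_mem (-(β'⁻¹ * α')) h0)
    rw [zmat_smul, zmat_add] at this
    convert this using 2 <;> ring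
  · right
    have hall : ∀ a b, zmat a b ∈ f → a = (β'⁻¹ * α') * b := by
      intro a b hab
      by_contra hne
      exact h0 (hsub h5 hab (sub_ne_zero.2 hne))
    obtain ⟨ω, hω⟩ := IsAlgClosed.exists_pow_nat_eq (β'⁻¹ * α') (n := 2) (by norm_num)
    rw [← hω] at hall h5
    refine ⟨ω, ?_, h5, hall⟩
    rintro rfl
    apply h2
    have := hall _ _ h1
    simpa using this
end alg

section cases
variable {F : Subgroup (Matrix.SpecialLinearGroup n4 ℂ)} {f : Submodule ℂ (Matrix n4 n4 ℂ)}

/-- The package of properties of the Lie algebra `f` of `F` which are used below. -/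
structure LieData (F : Subgroup (Matrix.SpecialLinearGroup n4 ℂ)) (f : Submodule ℂ (Matrix n4 n4 ℂ)) : Prop where
  hf : ∀ X, X ∈ f ↔ X.trace = 0 ∧ ∀ t : ℂ, InF F (NormedSpace.exp (t • X))
  hconj : ∀ g ∈ F, ∀ X ∈ f, (g : Matrix n4 n4 ℂ) * X * ((g⁻¹ : Matrix.SpecialLinearGroup n4 ℂ) : Matrix n4 n4 ℂ) ∈ f
  hbr : ∀ X ∈ f, ∀ Y ∈ f, X * Y - Y * X ∈ f
  hH : ∀ A : Matrix (Fin 3) (Fin 3) ℂ, A.det = 1 → Aᵀ * J3 * A = J3 → InF F (fromBlocks A 0 0 1)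
  hK : ∀ K : Matrix (Fin 3) (Fin 3) ℂ, K.trace = 0 → Kᵀ * J3 + J3 * K = 0 → fromBlocks K 0 0 0 ∈ f

lemma LieData.p3 (L : LieData F f) {X} (hX : X ∈ f) : zmat (X (Sum.inl 2) (Sum.inr 0)) (X (Sum.inr 0) (Sum.inl 2)) ∈ f := by
  have hX' : fromBlocks X.toBlocks₁₁ X.toBlocks₁₂ X.toBlocks₂₁ X.toBlocks₂₂ ∈ f := by
    rw [fromBlocks_toBlocks]; exact hX
  have := proj3 L.hconj L.hH L.hK hX'
  simpa only [toBlocks₁₂, toBlocks₂₁, Matrix.of_apply] using this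
lemma LieData.p1 (L : LieData F f) {X} (hX : X ∈ f) : zmat (X (Sum.inl 0) (Sum.inr 0)) (-X (Sum.inr 0) (Sum.inl 0)) ∈ f := by
  have hX' : fromBlocks X.toBlocks₁₁ X.toBlocks₁₂ X.toBlocks₂₁ X.toBlocks₂₂ ∈ f := by
    rw [fromBlocks_toBlocks]; exact hX
  have := proj1 L.hconj L.hH L.hK hX'
  simpa only [toBlocks₁₂, toBlocks₂₁, Matrix.of_apply] using this
lemma LieData.p2 (L : LieData F f) {X} (hX : X ∈ f) : zmat (X (Sum.inl 1) (Sum.inr 0)) (-X (Sum.inr 0) (Sum.inl 1)) ∈ f := by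
  have hX' : fromBlocks X.toBlocks₁₁ X.toBlocks₁₂ X.toBlocks₂₁ X.toBlocks₂₂ ∈ f := by
    rw [fromBlocks_toBlocks]; exact hX
  have := proj2 L.hconj L.hH L.hK hX'
  simpa only [toBlocks₁₂, toBlocks₂₁, Matrix.of_apply] using this

lemma LieData.k12 (L : LieData F f) : fromBlocks !![0,-1,0;1,0,0;0,0,0] 0 0 0 ∈ f :=
  L.hK _ (by simp [Matrix.trace, Fin.sum_univ_three])
    (by ext i j; fin_cases i <;> fin_cases j <;> simp [J3, Matrix.mul_apply, Fin.sum_univ_three])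
lemma LieData.k13 (L : LieData F f) : fromBlocks !![0,0,1;0,0,0;1,0,0] 0 0 0 ∈ f :=
  L.hK _ (by simp [Matrix.trace, Fin.sum_univ_three])
    (by ext i j; fin_cases i <;> fin_cases j <;> simp [J3, Matrix.mul_apply, Fin.sum_univ_three])
lemma LieData.k23 (L : LieData F f) : fromBlocks !![0,0,0;0,0,1;0,1,0] 0 0 0 ∈ f :=
  L.hK _ (by simp [Matrix.trace, Fin.sum_univ_three])
    (by ext i j; fin_cases i <;> fin_cases j <;> simp [J3, Matrix.mul_apply, Fin.sum_univ_three])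

lemma common_eig {v : Fin 3 → ℂ} {d d' : ℂ} (h1 : v 1 = -d * v 0) (h2 : v 0 = d * v 1) (h3 : d * v 2 = 0)
    (h4 : v 2 = d' * v 0) (h5 : v 0 = d' * v 2) : ∀ i, v i = 0 := by
  have : v 0 = 0 := by
    rcases mul_eq_zero.1 h3 with h | h
    · rw [h2, h, zero_mul]
    · rw [h5, h, mul_zero]
  intro i; fin_cases i
  · exact this
  · simp [h1, this]
  · simp [h4, this]

lemma sl_inv1 (g : Matrix.SpecialLinearGroup n4 ℂ) : ((g⁻¹ : Matrix.SpecialLinearGroup n4 ℂ) : Matrix n4 n4 ℂ) * (g : Matrix n4 n4 ℂ) = 1 := by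
  rw [← Matrix.SpecialLinearGroup.coe_mul]; simp
lemma sl_inv2 (g : Matrix.SpecialLinearGroup n4 ℂ) : (g : Matrix n4 n4 ℂ) * ((g⁻¹ : Matrix.SpecialLinearGroup n4 ℂ) : Matrix n4 n4 ℂ) = 1 := by
  rw [← Matrix.SpecialLinearGroup.coe_mul]; simp

lemma LieData.right (L : LieData F f) {g} (hg : g ∈ F) {X} (hX : X ∈ f) : ∃ Y ∈ f, (g : Matrix n4 n4 ℂ) * Y = X * g := by
  refine ⟨_, L.hconj g⁻¹ (F.inv_mem hg) X hX, ?_⟩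
  rw [inv_inv, ← mul_assoc, ← mul_assoc, sl_inv2, one_mul]
lemma LieData.left (L : LieData F f) {g} (hg : g ∈ F) {X} (hX : X ∈ f) : ∃ Y ∈ f, Y * g = (g : Matrix n4 n4 ℂ) * X := by
  refine ⟨_, L.hconj g hg X hX, ?_⟩
  rw [mul_assoc, sl_inv1, mul_one]

lemma caseA (L : LieData F f) (hirr : ∀ W : Submodule ℂ (n4 → ℂ),
      (∀ g ∈ F, ∀ x ∈ W, (g : Matrix n4 n4 ℂ).mulVec x ∈ W) → W = ⊥ ∨ W = ⊤)
    (h : ∀ α β, zmat α β ∈ f → α = 0) : False := by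
  have hb : ∀ X ∈ f, ∀ i, X (Sum.inl i) (Sum.inr 0) = 0 := by
    intro X hX i
    fin_cases i
    · exact h _ _ (L.p1 hX)
    · exact h _ _ (L.p2 hX)
    · exact h _ _ (L.p3 hX)
  have he : ∀ g ∈ F, ∀ X ∈ f, ∃ d, ∀ i, (X * g) i (Sum.inr 0) = d * g i (Sum.inr 0) := by
    intro g hg X hX
    obtain ⟨Y, hY, e⟩ := L.right hg hX
    refine ⟨Y (Sum.inr 0) (Sum.inr 0), fun i => ?_⟩
    rw [← e]
    simp [Matrix.mul_apply, Fintype.sum_sum_type, hb Y hY, mul_comm]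
  have hg0 : ∀ g ∈ F, ∀ i, g (Sum.inl i) (Sum.inr 0) = 0 := by
    intro g hg
    obtain ⟨d, h1⟩ := he g hg _ L.k12
    obtain ⟨d', h2⟩ := he g hg _ L.k13
    have a0 := h1 (Sum.inl 0)
    have a1 := h1 (Sum.inl 1)
    have a2 := h1 (Sum.inl 2)
    have b0 := h2 (Sum.inl 0)
    have b2 := h2 (Sum.inl 2)
    simp [Matrix.mul_apply, Fintype.sum_sum_type, Fin.sum_univ_three] at a0 a1 a2 b0 b2
    exact common_eig (v := fun i => g (Sum.inl i) (Sum.inr 0)) (d := d) (d' := d') (by linear_combination -a0) a1 (by simpa using a2) b0 b2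
  let W : Submodule ℂ (n4 → ℂ) :=
    { carrier := {x | ∀ i, x (Sum.inl i) = 0}
      zero_mem' := fun i => rfl
      add_mem' := fun {x y} hx hy i => by simp [hx i, hy i]
      smul_mem' := fun c x hx i => by simp [hx i] }
  have hW : ∀ x, x ∈ W ↔ ∀ i, x (Sum.inl i) = 0 := fun x => Iff.rfl
  rcases hirr W (fun g hg x hx => by
    rw [hW] at hx ⊢
    intro i
    simp [Matrix.mulVec, dotProduct, Fintype.sum_sum_type, hx, hg0 g hg]) with e | e
  · have : Pi.single (Sum.inr 0) 1 ∈ W := by rw [hW]; simp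
    rw [e, Submodule.mem_bot] at this
    simpa using congrFun this (Sum.inr 0)
  · have : Pi.single (Sum.inl 0) 1 ∈ W := by rw [e]; trivial
    have := (hW _).1 this 0
    simp at this

lemma caseB (L : LieData F f) (hirr : ∀ W : Submodule ℂ (n4 → ℂ),
      (∀ g ∈ F, ∀ x ∈ W, (g : Matrix n4 n4 ℂ).mulVec x ∈ W) → W = ⊥ ∨ W = ⊤)
    (h : ∀ α β, zmat α β ∈ f → β = 0) : False := by
  have hb : ∀ X ∈ f, ∀ i, X (Sum.inr 0) (Sum.inl i) = 0 := by
    intro X hX i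
    fin_cases i
    · exact neg_eq_zero.1 (h _ _ (L.p1 hX))
    · exact neg_eq_zero.1 (h _ _ (L.p2 hX))
    · exact h _ _ (L.p3 hX)
  have he : ∀ g ∈ F, ∀ X ∈ f, ∃ d, ∀ i, ((g : Matrix n4 n4 ℂ) * X) (Sum.inr 0) i = d * g (Sum.inr 0) i := by
    intro g hg X hX
    obtain ⟨Y, hY, e⟩ := L.left hg hX
    refine ⟨Y (Sum.inr 0) (Sum.inr 0), fun i => ?_⟩
    rw [← e]
    simp [Matrix.mul_apply, Fintype.sum_sum_type, hb Y hY]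
  have hg0 : ∀ g ∈ F, ∀ i, g (Sum.inr 0) (Sum.inl i) = 0 := by
    intro g hg
    obtain ⟨d, h1⟩ := he g hg _ L.k12
    obtain ⟨d', h2⟩ := he g hg _ L.k13
    have a0 := h1 (Sum.inl 0)
    have a1 := h1 (Sum.inl 1)
    have a2 := h1 (Sum.inl 2)
    have b0 := h2 (Sum.inl 0)
    have b2 := h2 (Sum.inl 2)
    simp [Matrix.mul_apply, Fintype.sum_sum_type, Fin.sum_univ_three] at a0 a1 a2 b0 b2
    exact common_eig (v := fun i => g (Sum.inr 0) (Sum.inl i)) (d := -d) (d' := d') (by linear_combination a0) (by linear_combination -a1) (by simpa using a2) b0 b2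
  let W : Submodule ℂ (n4 → ℂ) :=
    { carrier := {x | x (Sum.inr 0) = 0}
      zero_mem' := rfl
      add_mem' := fun {x y} hx hy => by
        change x _ = 0 at hx
        change y _ = 0 at hy
        change (x + y) _ = 0
        simp [hx, hy]
      smul_mem' := fun c x hx => by
        change x _ = 0 at hx
        change (c • x) _ = 0
        simp [hx] }
  have hW : ∀ x, x ∈ W ↔ x (Sum.inr 0) = 0 := fun x => Iff.rfl
  rcases hirr W (fun g hg x hx => by
    rw [hW] at hx ⊢
    simp [Matrix.mulVec, dotProduct, Fintype.sum_sum_type, hx, hg0 g hg]) with e | e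
  · have : Pi.single (Sum.inl 0) 1 ∈ W := by rw [hW]; simp
    rw [e, Submodule.mem_bot] at this
    simpa using congrFun this (Sum.inl 0)
  · have : Pi.single (Sum.inr 0) 1 ∈ W := by rw [e]; trivial
    have := (hW _).1 this
    simp at this
end cases

section casec
variable {F : Subgroup (Matrix.SpecialLinearGroup n4 ℂ)} {f : Submodule ℂ (Matrix n4 n4 ℂ)}
attribute [local instance] Matrix.linftyOpNormedRing Matrix.linftyOpNormedAlgebra

lemma exp_nilp (X : Matrix n4 n4 ℂ) (h : X * X = 0) : NormedSpace.exp X = 1 + X := aux_exp_sq_zero X h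

lemma LieData.exp_mem (L : LieData F f) {X} (hX : X ∈ f) : InF F (NormedSpace.exp X) := by
  have := ((L.hf X).1 hX).2 1
  rwa [one_smul] at this

lemma caseC (L : LieData F f) (h10 : zmat 1 0 ∈ f) (h01 : zmat 0 1 ∈ f) (hFne : F ≠ ⊤) : False := by
  have s1 : ∀ i, single (Sum.inl i) (Sum.inr 0) 1 ∈ f := by
    intro i; fin_cases i
    · convert unproj1 L.hconj L.hH h10 using 1
      ext i j; rcases i with i | i <;> rcases j with j | j <;> fin_cases i <;> fin_cases j <;> simp [single]
    · convert unproj2 L.hconj L.hH h10 using 1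
      ext i j; rcases i with i | i <;> rcases j with j | j <;> fin_cases i <;> fin_cases j <;> simp [single]
    · convert h10 using 1
      ext i j; rcases i with i | i <;> rcases j with j | j <;> fin_cases i <;> fin_cases j <;> simp [single, zmat]
  have s2 : ∀ i, single (Sum.inr 0) (Sum.inl i) 1 ∈ f := by
    intro i; fin_cases i
    · convert f.neg_mem (unproj1 L.hconj L.hH h01) using 1
      ext i j; rcases i with i | i <;> rcases j with j | j <;> fin_cases i <;> fin_cases j <;> simp [single]
    · convert f.neg_mem (unproj2 L.hconj L.hH h01) using 1
      ext i j; rcases i with i | i <;> rcases j with j | j <;> fin_cases i <;> fin_cases j <;> simp [single]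
    · convert h01 using 1
      ext i j; rcases i with i | i <;> rcases j with j | j <;> fin_cases i <;> fin_cases j <;> simp [single, zmat]
  have s3 : ∀ i j, i ≠ j → ∀ t : ℂ, single i j t ∈ f := by
    have : ∀ i j, i ≠ j → single i j (1 : ℂ) ∈ f := by
      intro i j hij
      rcases i with i | i <;> rcases j with j | j
      · have := L.hbr _ (s1 i) _ (s2 j)
        have hij' : j ≠ i := fun e => hij (by rw [e])
        rw [single_mul_single_same, single_mul_single_of_ne] at this
        · simpa using this
        · simpa using hij'
      · fin_cases j; exact s1 i
      · fin_cases i; exact s2 j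
      · exact absurd (by rw [Subsingleton.elim i j]) hij
    intro i j hij t
    have := f.smul_mem t (this i j hij)
    simpa [smul_single] using this
  have s4 : ∀ i, (single (Sum.inl i) (Sum.inl i) 1 - single (Sum.inr 0) (Sum.inr 0) 1 : Matrix n4 n4 ℂ) ∈ f := by
    intro i
    have := L.hbr _ (s1 i) _ (s2 i)
    simpa using this
  have s5 : ∀ D : n4 → ℂ, ∑ i, D i = 0 → diagonal D ∈ f := by
    intro D hD
    have := f.sum_mem (t := Finset.univ) (fun i _ => f.smul_mem (D (Sum.inl i)) (s4 i))
    convert this using 1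
    simp [Fintype.sum_sum_type, Fin.sum_univ_three] at hD
    ext i j; rcases i with i | i <;> rcases j with j | j <;> fin_cases i <;> fin_cases j <;> simp [single, Fin.sum_univ_three]
    linear_combination hD
  apply hFne
  rw [eq_top_iff]
  rintro g -
  apply InF.mem
  refine Matrix.diagonal_transvection_induction (InF F) (g : Matrix n4 n4 ℂ) ?_ ?_ (fun A B => InF.mul)
  · intro D hD
    rw [g.2, det_diagonal] at hD
    have hne : ∀ i, D i ≠ 0 := by
      intro i hi
      rw [Finset.prod_eq_zero (Finset.mem_univ i) hi] at hD
      exact zero_ne_one hD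
    let E : n4 → ℂ := Sum.elim (fun i => Complex.log (D (Sum.inl i))) (fun _ => -∑ i, Complex.log (D (Sum.inl i)))
    have hE := L.exp_mem (s5 E (by simp [E, Fintype.sum_sum_type]))
    rw [Matrix.exp_diagonal] at hE
    convert hE using 2
    ext i
    rw [Pi.coe_exp, ← Complex.exp_eq_exp_ℂ]
    rcases i with i | i
    · simp [E, Complex.exp_log (hne _)]
    · simp only [E, Sum.elim_inr, Complex.exp_neg, Complex.exp_sum, Complex.exp_log (hne _)]
      rw [Fintype.prod_sum_type] at hD
      simp at hD
      fin_cases i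
      exact eq_inv_of_mul_eq_one_right hD
  · intro t
    have := L.exp_mem (s3 t.i t.j t.hij t.c)
    rwa [exp_nilp _ (single_mul_single_of_ne _ _ _ _ t.hij.symm _)] at this
end casec

section cased
variable {F : Subgroup (Matrix.SpecialLinearGroup n4 ℂ)} {f : Submodule ℂ (Matrix n4 n4 ℂ)} {ω : ℂ}

/-- The diagonal coefficients of the invariant form. -/
def sv (ω : ℂ) : n4 → ℂ := Sum.elim ![1, 1, -1] (fun _ => ω ^ 2)

lemma sv_ne (hω : ω ≠ 0) (i : n4) : sv ω i ≠ 0 := by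
  rcases i with i | i <;> fin_cases i <;> simp [sv, hω]

lemma rel (L : LieData F f) (hall : ∀ α β, zmat α β ∈ f → α = ω^2 * β) {X} (hX : X ∈ f) (i : Fin 3) :
    sv ω (Sum.inl i) * X (Sum.inl i) (Sum.inr 0) + ω ^ 2 * X (Sum.inr 0) (Sum.inl i) = 0 := by
  fin_cases i
  · have := hall _ _ (L.p1 hX)
    simp [sv]
    linear_combination this
  · have := hall _ _ (L.p2 hX)
    simp [sv]
    linear_combination this
  · have := hall _ _ (L.p3 hX)
    simp [sv]
    linear_combination -this

lemma zj_mem (L : LieData F f) (hz : zmat (ω^2) 1 ∈ f) (j : Fin 3) :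
    single (Sum.inl j) (Sum.inr 0) (ω^2) - single (Sum.inr 0) (Sum.inl j) (sv ω (Sum.inl j)) ∈ f := by
  fin_cases j
  · convert unproj1 L.hconj L.hH hz using 1
    ext i j; rcases i with i | i <;> rcases j with j | j <;> fin_cases i <;> fin_cases j <;> simp [single, sv]
  · convert unproj2 L.hconj L.hH hz using 1
    ext i j; rcases i with i | i <;> rcases j with j | j <;> fin_cases i <;> fin_cases j <;> simp [single, sv]
  · convert hz using 1
    ext i j; rcases i with i | i <;> rcases j with j | j <;> fin_cases i <;> fin_cases j <;> simp [single, sv, zmat]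

lemma f_so (L : LieData F f) (hω : ω ≠ 0) (hz : zmat (ω^2) 1 ∈ f)
    (hall : ∀ α β, zmat α β ∈ f → α = ω^2 * β) {X} (hX : X ∈ f) :
    Xᵀ * diagonal (sv ω) + diagonal (sv ω) * X = 0 := by
  have h1 : ∀ i j : Fin 3, sv ω (Sum.inl i) * X (Sum.inl i) (Sum.inl j) + sv ω (Sum.inl j) * X (Sum.inl j) (Sum.inl i)
      = if i = j then 2 * sv ω (Sum.inl i) * X (Sum.inr 0) (Sum.inr 0) else 0 := by
    intro i j
    have := rel L hall (L.hbr _ hX _ (zj_mem L hz j)) i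
    apply mul_left_cancel₀ (pow_ne_zero 2 hω)
    simp [mul_sub, sub_mul, Matrix.mul_apply, single, Fintype.sum_sum_type] at this
    by_cases hij : i = j
    · subst hij
      simp only [if_true] at this ⊢
      linear_combination this
    · have hji : ¬ j = i := fun e => hij e.symm
      simp [hij, hji] at this
      simp only [hij, if_false]
      linear_combination this
  have h2 := ((L.hf X).1 hX).1
  simp [Matrix.trace, Fintype.sum_sum_type, Fin.sum_univ_three] at h2
  have e0 := h1 0 0
  have e1 := h1 1 1
  have e2 := h1 2 2
  simp [sv] at e0 e1 e2
  have h3 : X (Sum.inr 0) (Sum.inr 0) = 0 := by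
    linear_combination h2/4 - e0/8 - e1/8 + e2/8
  ext i j
  simp only [Matrix.add_apply, Matrix.mul_diagonal, Matrix.diagonal_mul, Matrix.transpose_apply, Matrix.zero_apply]
  rcases i with i | i <;> rcases j with j | j
  · have := h1 i j
    rw [h3] at this
    simp at this
    linear_combination this
  · have := rel L hall hX i
    fin_cases j
    simp [sv] at this ⊢
    linear_combination this
  · have := rel L hall hX j
    fin_cases i
    simp [sv] at this ⊢
    linear_combination this
  · fin_cases i; fin_cases j; simp [h3]

lemma M_scalar (L : LieData F f) (hz : zmat (ω^2) 1 ∈ f) (M : Matrix n4 n4 ℂ) (hM : Mᵀ = M)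
    (h : ∀ X ∈ f, Xᵀ * M + M * X = 0) : M = M (Sum.inl 0) (Sum.inl 0) • diagonal (sv ω) := by
  have hs : ∀ i j, M i j = M j i := fun i j => by conv_lhs => rw [← hM, transpose_apply]
  have a := fun i j => congrFun (congrFun (h _ L.k12) i) j
  have b := fun i j => congrFun (congrFun (h _ L.k13) i) j
  have c := fun i j => congrFun (congrFun (h _ hz) i) j
  simp only [Matrix.add_apply, Matrix.mul_apply, Fintype.sum_sum_type, Fin.sum_univ_three, transpose_apply, zmat] at a b c
  have a11 := a (Sum.inl 0) (Sum.inl 0)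
  have a12 := a (Sum.inl 0) (Sum.inl 1)
  have a13 := a (Sum.inl 0) (Sum.inl 2)
  have a23 := a (Sum.inl 1) (Sum.inl 2)
  have a14 := a (Sum.inl 0) (Sum.inr 0)
  have a24 := a (Sum.inl 1) (Sum.inr 0)
  have b13 := b (Sum.inl 0) (Sum.inl 2)
  have b14 := b (Sum.inl 0) (Sum.inr 0)
  have c34 := c (Sum.inl 2) (Sum.inr 0)
  simp at a11 a12 a13 a23 a14 a24 b13 b14 c34
  have h01 := hs (Sum.inl 0) (Sum.inl 1)
  have h02 := hs (Sum.inl 0) (Sum.inl 2)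
  have h12 := hs (Sum.inl 1) (Sum.inl 2)
  have h03 := hs (Sum.inl 0) (Sum.inr 0)
  have h13 := hs (Sum.inl 1) (Sum.inr 0)
  have h23 := hs (Sum.inl 2) (Sum.inr 0)
  ext i j
  rcases i with i | i <;> rcases j with j | j <;> fin_cases i <;> fin_cases j <;> simp [sv] <;> grind

lemma F_so (L : LieData F f) (hconn : IsConnectedSubgroup F) (hω : ω ≠ 0) (hz : zmat (ω^2) 1 ∈ f)
    (hall : ∀ α β, zmat α β ∈ f → α = ω^2 * β) {g : Matrix n4 n4 ℂ} (hg : InF F g) :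
    gᵀ * diagonal (sv ω) * g = diagonal (sv ω) := by
  let c : Matrix n4 n4 ℂ → ℂ := fun g => (gᵀ * diagonal (sv ω) * g) (Sum.inl 0) (Sum.inl 0)
  have key : ∀ g, InF F g → gᵀ * diagonal (sv ω) * g = c g • diagonal (sv ω) := by
    rintro _ ⟨g, hg, rfl⟩
    refine M_scalar L hz _ (by simp [Matrix.transpose_mul, mul_assoc]) ?_
    intro X hX
    obtain ⟨Y, hY, e⟩ := L.left hg hX
    have h1 := f_so L hω hz hall hY
    have h2 : Xᵀ * ((g : Matrix n4 n4 ℂ)ᵀ * diagonal (sv ω) * g) + (g : Matrix n4 n4 ℂ)ᵀ * diagonal (sv ω) * g * X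
       = ((g : Matrix n4 n4 ℂ) * X)ᵀ * diagonal (sv ω) * g + (g : Matrix n4 n4 ℂ)ᵀ * diagonal (sv ω) * (g * X) := by
      rw [transpose_mul]; simp only [mul_assoc]
    rw [h2, ← e, transpose_mul]
    have h3 : (g : Matrix n4 n4 ℂ)ᵀ * Yᵀ * diagonal (sv ω) * g + (g : Matrix n4 n4 ℂ)ᵀ * diagonal (sv ω) * (Y * g)
      = (g : Matrix n4 n4 ℂ)ᵀ * (Yᵀ * diagonal (sv ω) + diagonal (sv ω) * Y) * g := by
      simp only [mul_add, add_mul, mul_assoc]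
    rw [h3, h1]; simp
  have hd : (diagonal (sv ω)).det ≠ 0 := by
    rw [det_diagonal]; exact Finset.prod_ne_zero_iff.2 fun i _ => sv_ne hω i
  have hc4 : ∀ g, InF F g → c g ^ 4 = 1 := by
    intro g hg
    have h1 := congrArg Matrix.det (key g hg)
    have h2 : g.det = 1 := by obtain ⟨k, _, rfl⟩ := hg; exact k.2
    rw [det_mul, det_mul, det_transpose, h2, det_smul] at h1
    apply mul_right_cancel₀ hd
    simpa [n4] using h1.symm
  have hcont : Continuous c := by
    have : Continuous fun g : Matrix n4 n4 ℂ => gᵀ * diagonal (sv ω) * g := by fun_prop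
    exact this.matrix_elem _ _
  have hfin : {z : ℂ | z ^ 4 = 1}.Finite := by
    have : {z : ℂ | z ^ 4 = 1} ⊆ (Polynomial.nthRoots 4 (1:ℂ)).toFinset := by
      intro z hz
      simp only [Finset.mem_coe, Multiset.mem_toFinset]
      rw [Polynomial.mem_nthRoots (by norm_num)]
      exact hz
    exact (Finset.finite_toSet _).subset this
  have hsub : (Set.image c {m | InF F m}).Subsingleton := by
    have hp : IsPreconnected (Set.image c {m | InF F m}) := hconn.isPreconnected.image _ hcont.continuousOn
    exact hfin.countable.isTotallyDisconnected _ (by rintro _ ⟨m, hm, rfl⟩; exact hc4 m hm) hp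
  have h1 : c g = c 1 := hsub ⟨g, hg, rfl⟩ ⟨1, InF.one, rfl⟩
  have h2 : c 1 = 1 := by simp [c, sv]
  rw [key g hg, h1, h2, one_smul]
end cased

section trans
variable {F : Subgroup (Matrix.SpecialLinearGroup n4 ℂ)} {f : Submodule ℂ (Matrix n4 n4 ℂ)} {ω : ℂ}

/-- The rotation in the last two coordinates. -/
noncomputable def Rmat (ω c σ : ℂ) : Matrix n4 n4 ℂ :=
  fromBlocks !![1,0,0;0,1,0;0,0,c] !![0;0;ω*σ] !![0,0,σ/ω] !![c]

lemma R_mem (L : LieData F f) (hω : ω ≠ 0) (hz : zmat (ω^2) 1 ∈ f) {c σ : ℂ} (h : c^2 - σ^2 = 1) :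
    InF F (Rmat ω c σ) := by
  let V : Matrix n4 n4 ℂ := fromBlocks !![1,0,0;0,1,0;0,0,ω] !![0;0;-ω] !![0,0,1] !![1]
  let V' : Matrix n4 n4 ℂ := fromBlocks !![1,0,0;0,1,0;0,0,1/(2*ω)] !![0;0;1/2] !![0,0,-1/(2*ω)] !![1/2]
  have hVV : V * V' = 1 := by
    simp only [V, V', fromBlocks_multiply]
    rw [← fromBlocks_one]
    congr 1 <;> (ext i j; fin_cases i <;> fin_cases j <;> simp [Matrix.mul_apply, Fin.sum_univ_three, Matrix.one_apply] <;> (try field_simp) <;> (try norm_num))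
  have hVV' : V' * V = 1 := mul_eq_one_comm.1 hVV
  let U : (Matrix n4 n4 ℂ)ˣ := ⟨V, V', hVV, hVV'⟩
  have hne : c + σ ≠ 0 := by
    intro e
    have : (c + σ) * (c - σ) = 1 := by linear_combination h
    rw [e, zero_mul] at this
    exact zero_ne_one this
  let E : n4 → ℂ := Sum.elim ![0, 0, Complex.log (c+σ)] (fun _ => -Complex.log (c+σ))
  have h1 := L.exp_mem (f.smul_mem (Complex.log (c+σ) / ω) hz)
  have h2 : (Complex.log (c+σ) / ω) • zmat (ω^2) 1 = (U : Matrix n4 n4 ℂ) * diagonal E * ((U⁻¹ : (Matrix n4 n4 ℂ)ˣ) : Matrix n4 n4 ℂ) := by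
    change _ = V * diagonal E * V'
    have : diagonal E = fromBlocks !![0,0,0;0,0,0;0,0,Complex.log (c+σ)] 0 0 !![-Complex.log (c+σ)] := by
      ext i j; rcases i with i | i <;> rcases j with j | j <;> fin_cases i <;> fin_cases j <;> simp [E]
    rw [this, zmat_smul, zmat]
    simp only [V, V', fromBlocks_multiply]
    congr 1 <;> (ext i j; fin_cases i <;> fin_cases j <;> simp [Matrix.mul_apply, Fin.sum_univ_three] <;> (try field_simp) <;> (try ring))
  rw [h2, Matrix.exp_units_conj, Matrix.exp_diagonal] at h1
  convert h1 using 1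
  change _ = V * diagonal _ * V'
  have : diagonal (NormedSpace.exp E) = fromBlocks !![1,0,0;0,1,0;0,0,c+σ] 0 0 !![c-σ] := by
    have hc : (c+σ)⁻¹ = c - σ := by
      apply inv_eq_of_mul_eq_one_right; linear_combination h
    ext i j; rcases i with i | i <;> rcases j with j | j <;> fin_cases i <;> fin_cases j <;>
      simp [E, ← Complex.exp_eq_exp_ℂ, Complex.exp_log hne, Complex.exp_neg, hc, Pi.coe_exp]
  rw [this, Rmat]
  simp only [V, V', fromBlocks_multiply]
  congr 1 <;> (ext i j; fin_cases i <;> fin_cases j <;> simp [Matrix.mul_apply, Fin.sum_univ_three] <;> (try field_simp) <;> (try ring))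

/-- A vector from its coordinates. -/
def vec4 (x y z d : ℂ) : n4 → ℂ := Sum.elim ![x, y, z] (fun _ => d)

lemma vec4_eta (v : n4 → ℂ) : v = vec4 (v (Sum.inl 0)) (v (Sum.inl 1)) (v (Sum.inl 2)) (v (Sum.inr 0)) := by
  ext i; rcases i with i | i <;> fin_cases i <;> rfl

/-- `v` can be moved to the last basis vector by `F`. -/
def Reach (F : Subgroup (Matrix.SpecialLinearGroup n4 ℂ)) (v : n4 → ℂ) : Prop :=
  ∃ k, InF F k ∧ k *ᵥ v = vec4 0 0 0 1

lemma Reach.step {k : Matrix n4 n4 ℂ} (hk : InF F k) {v w : n4 → ℂ} (e : k *ᵥ v = w) (h : Reach F w) : Reach F v := by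
  obtain ⟨m, hm, e2⟩ := h
  exact ⟨m * k, hm.mul hk, by rw [← mulVec_mulVec, e, e2]⟩

lemma R_mulVec (x y z d c σ : ℂ) : Rmat ω c σ *ᵥ vec4 x y z d = vec4 x y (c*z+ω*σ*d) (σ/ω*z+c*d) := by
  ext i; rcases i with i | i <;> fin_cases i <;> simp [Rmat, vec4, Matrix.mulVec, dotProduct, Fintype.sum_sum_type, Fin.sum_univ_three]

lemma A_mulVec (A : Matrix (Fin 3) (Fin 3) ℂ) (x y z d : ℂ) : (fromBlocks A 0 0 1 : Matrix n4 n4 ℂ) *ᵥ vec4 x y z d =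
    vec4 (A 0 0 * x + A 0 1 * y + A 0 2 * z) (A 1 0 * x + A 1 1 * y + A 1 2 * z) (A 2 0 * x + A 2 1 * y + A 2 2 * z) d := by
  ext i; rcases i with i | i <;> fin_cases i <;> simp [vec4, Matrix.mulVec, dotProduct, Fintype.sum_sum_type, Fin.sum_univ_three]

lemma reach1 (L : LieData F f) (hω : ω ≠ 0) (hz : zmat (ω^2) 1 ∈ f) {z d : ℂ} (h : -z^2 + ω^2*d^2 = ω^2) :
    Reach F (vec4 0 0 z d) := by
  have h1 : d^2 - (-z/ω)^2 = 1 := by field_simp; linear_combination h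
  refine ⟨_, R_mem L hω hz h1, ?_⟩
  rw [R_mulVec]
  congr 1
  · field_simp; ring
  · linear_combination h1

/-- Negated reflection. -/
noncomputable def refl3 (a b c q : ℂ) : Matrix (Fin 3) (Fin 3) ℂ :=
  !![-1 + 2*a*a/q, 2*a*b/q, -(2*a*c/q); 2*b*a/q, -1+2*b*b/q, -(2*b*c/q); 2*c*a/q, 2*c*b/q, -1-2*c*c/q]

lemma refl3_mem (L : LieData F f) {a b c q : ℂ} (hq : q ≠ 0) (h : a^2+b^2-c^2 = q) :
    InF F (fromBlocks (refl3 a b c q) 0 0 1) := by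
  apply L.hH
  · rw [refl3, Matrix.det_fin_three]
    simp
    field_simp
    subst h
    ring
  · ext i j; fin_cases i <;> fin_cases j <;> simp [refl3, J3, Matrix.mul_apply, Fin.sum_univ_three] <;> field_simp <;> subst h <;> ring

lemma reach2 (L : LieData F f) (hω : ω ≠ 0) (hz : zmat (ω^2) 1 ∈ f) {x y z d : ℂ} (hq : x^2+y^2-z^2 ≠ 0)
    (h : x^2+y^2-z^2 + ω^2*d^2 = ω^2) : Reach F (vec4 x y z d) := by
  obtain ⟨w, hw, hne⟩ : ∃ w : ℂ, -w^2 = x^2+y^2-z^2 ∧ x^2+y^2-(z+w)^2 ≠ 0 := by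
    obtain ⟨w, hw⟩ := IsAlgClosed.exists_pow_nat_eq (-(x^2+y^2-z^2)) (n := 2) (by norm_num)
    by_cases hne : x^2+y^2-(z+w)^2 = 0
    · refine ⟨-w, by linear_combination -hw, fun e => hq ?_⟩
      linear_combination (e + hne)/4 + hw/2
    · exact ⟨w, by linear_combination -hw, hne⟩
  refine Reach.step (refl3_mem L hne rfl) (A_mulVec _ x y z d) ?_
  have e := reach1 L hω hz (z := w) (d := d) (by linear_combination h + hw)
  convert e using 2
  · simp [refl3]; field_simp; linear_combination (-x) * hw
  · simp [refl3]; field_simp; linear_combination (-y) * hw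
  · simp [refl3]; field_simp; linear_combination (-(z + w)) * hw

lemma reach3 (L : LieData F f) (hω : ω ≠ 0) (hz : zmat (ω^2) 1 ∈ f) {x y z d : ℂ} (hz0 : z ≠ 0)
    (h : x^2+y^2-z^2 + ω^2*d^2 = ω^2) : Reach F (vec4 x y z d) := by
  by_cases hq : x^2+y^2-z^2 = 0
  swap
  · exact reach2 L hω hz hq h
  have hd : d^2 = 1 := by
    apply mul_left_cancel₀ (pow_ne_zero 2 hω); linear_combination h - hq
  have hd0 : d ≠ 0 := by rintro rfl; norm_num at hd
  obtain ⟨σ, hσ, hne⟩ : ∃ σ : ℂ, (5/4)^2 - σ^2 = 1 ∧ (σ/ω*z+5/4*d)^2 ≠ 1 := by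
    by_cases hne : ((3/4)/ω*z+5/4*d)^2 = 1
    · refine ⟨-(3/4), by norm_num, fun e => ?_⟩
      have : z * d / ω = 0 := by linear_combination (hne - e)*(4/15)
      simp [hω, hz0, hd0] at this
    · exact ⟨3/4, by norm_num, hne⟩
  refine Reach.step (R_mem L hω hz hσ) (R_mulVec x y z d _ σ) ?_
  have hQ : x^2+y^2-(5/4*z+ω*σ*d)^2 + ω^2*(σ/ω*z+5/4*d)^2 = ω^2 := by
    have : ω^2*(σ/ω*z+5/4*d)^2 = (σ*z+5/4*ω*d)^2 := by field_simp
    rw [this]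
    linear_combination h + (ω^2*d^2 - z^2) * hσ
  refine reach2 L hω hz (fun e => hne ?_) hQ
  apply mul_left_cancel₀ (pow_ne_zero 2 hω); linear_combination hQ - e

lemma reach (L : LieData F f) (hω : ω ≠ 0) (hz : zmat (ω^2) 1 ∈ f) {x y z d : ℂ}
    (h : x^2+y^2-z^2 + ω^2*d^2 = ω^2) : Reach F (vec4 x y z d) := by
  by_cases hz0 : z = 0
  swap
  · exact reach3 L hω hz hz0 h
  by_cases hq : x^2+y^2-z^2 = 0
  swap
  · exact reach2 L hω hz hq h
  by_cases hx : x = 0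
  · have hy : y = 0 := by
      subst hz0 hx
      simpa using hq
    subst hz0 hx hy
    exact reach1 L hω hz (by linear_combination h)
  · have hm : InF F (fromBlocks !![0,0,Complex.I;0,1,0;Complex.I,0,0] 0 0 1) := by
      apply L.hH
      · simp [Matrix.det_fin_three]
      · ext i j; fin_cases i <;> fin_cases j <;> simp [J3, Matrix.mul_apply, Fin.sum_univ_three]
    refine Reach.step hm (A_mulVec _ x y z d) ?_
    apply reach3 L hω hz
    · simp [hx]
    · simp [mul_pow]
      linear_combination h

lemma SO_mem (L : LieData F f) (hconn : IsConnectedSubgroup F) (hω : ω ≠ 0) (hz : zmat (ω^2) 1 ∈ f)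
    (hall : ∀ α β, zmat α β ∈ f → α = ω^2 * β) (g : Matrix.SpecialLinearGroup n4 ℂ)
    (hg : (g : Matrix n4 n4 ℂ)ᵀ * diagonal (sv ω) * g = diagonal (sv ω)) : g ∈ F := by
  have hQ := congrFun (congrFun hg (Sum.inr 0)) (Sum.inr 0)
  simp [Matrix.mul_apply, Fintype.sum_sum_type, Fin.sum_univ_three, sv, diagonal_apply] at hQ
  have hr := reach L hω hz (x := g (Sum.inl 0) (Sum.inr 0)) (y := g (Sum.inl 1) (Sum.inr 0))
    (z := g (Sum.inl 2) (Sum.inr 0)) (d := g (Sum.inr 0) (Sum.inr 0)) (by linear_combination hQ)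
  obtain ⟨_, ⟨k, hk, rfl⟩, e⟩ := hr
  have hm : (k * g : Matrix n4 n4 ℂ)ᵀ * diagonal (sv ω) * (k * g : Matrix n4 n4 ℂ) = diagonal (sv ω) := by
    have := F_so L hconn hω hz hall ⟨k, hk, rfl⟩
    rw [transpose_mul]
    calc _ = (g : Matrix n4 n4 ℂ)ᵀ * ((k : Matrix n4 n4 ℂ)ᵀ * diagonal (sv ω) * k) * g := by simp only [mul_assoc]
      _ = _ := by rw [this, hg]
  have hcol : ∀ i, (k * g : Matrix n4 n4 ℂ) i (Sum.inr 0) = vec4 0 0 0 1 i := by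
    intro i
    rw [← e, Matrix.mul_apply, Matrix.mulVec, dotProduct]
    congr 1
    ext j
    congr 1
    exact congrFun (vec4_eta fun j => g j (Sum.inr 0)) j
  have hdet : (k * g : Matrix n4 n4 ℂ).det = 1 := by rw [det_mul, k.2, g.2, one_mul]
  generalize hmm : (k * g : Matrix n4 n4 ℂ) = m at *
  have hrow : ∀ i, m (Sum.inr 0) (Sum.inl i) = 0 := by
    intro i
    have := congrFun (congrFun hm (Sum.inl i)) (Sum.inr 0)
    simp [Matrix.mul_apply, Fintype.sum_sum_type, Fin.sum_univ_three, sv, diagonal_apply, hcol, vec4, hω] at this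
    exact this
  have hblock : m = fromBlocks m.toBlocks₁₁ 0 0 1 := by
    conv_lhs => rw [← fromBlocks_toBlocks m]
    congr 1
    · ext i j; fin_cases j; simp only [toBlocks₁₂, of_apply]
      refine (hcol _).trans ?_
      fin_cases i <;> rfl
    · ext i j; fin_cases i; exact hrow j
    · ext i j; fin_cases i; fin_cases j; exact hcol _
  have hin : InF F m := by
    rw [hblock]
    apply L.hH
    · rw [hblock, det_fromBlocks_zero₂₁] at hdet
      simpa using hdet
    · have hS : diagonal (sv ω) = fromBlocks J3 0 0 !![ω^2] := by
        ext i j; rcases i with i | i <;> rcases j with j | j <;> fin_cases i <;> fin_cases j <;> simp [sv, J3]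
      rw [hblock, hS, fromBlocks_transpose, fromBlocks_multiply, fromBlocks_multiply] at hm
      have := (fromBlocks_inj.1 hm).1
      simpa using this
  have : k * g ∈ F := by
    apply InF.mem
    rw [Matrix.SpecialLinearGroup.coe_mul, hmm]; exact hin
  have h2 := F.mul_mem (F.inv_mem hk) this
  rwa [inv_mul_cancel_left] at h2

lemma final (L : LieData F f) (hconn : IsConnectedSubgroup F) (hω : ω ≠ 0) (hz : zmat (ω^2) 1 ∈ f)
    (hall : ∀ α β, zmat α β ∈ f → α = ω^2 * β) :
    ∃ S : QuadraticForm ℂ (n4 → ℂ),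
      (∀ x : n4 → ℂ, (∀ y, QuadraticMap.polar S x y = 0) → x = 0) ∧
      ∀ g : Matrix.SpecialLinearGroup n4 ℂ,
        g ∈ F ↔ ∀ x : n4 → ℂ, S ((g : Matrix n4 n4 ℂ).mulVec x) = S x := by
  have hS : ∀ x, QuadraticMap.weightedSumSquares ℂ (sv ω) x = x ⬝ᵥ (diagonal (sv ω) *ᵥ x) := by
    intro x
    simp only [QuadraticMap.weightedSumSquares_apply, dotProduct, mulVec_diagonal, smul_eq_mul]
    exact Finset.sum_congr rfl fun i _ => by ring
  have hpol : ∀ x y, QuadraticMap.polar (QuadraticMap.weightedSumSquares ℂ (sv ω)) x y = 2 * ∑ i, sv ω i * x i * y i := by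
    intro x y
    simp only [QuadraticMap.polar, QuadraticMap.weightedSumSquares_apply, smul_eq_mul, Finset.mul_sum, ← Finset.sum_sub_distrib, Pi.add_apply]
    exact Finset.sum_congr rfl fun i _ => by ring
  refine ⟨QuadraticMap.weightedSumSquares ℂ (sv ω), ?_, ?_⟩
  · intro x hx
    ext i
    have := hx (Pi.single i 1)
    rw [hpol, Finset.sum_eq_single i] at this
    · simpa [sv_ne hω] using this
    · intro j _ hj; simp [hj]
    · simp
  · intro g
    constructor
    · intro hg x
      have h := F_so L hconn hω hz hall ⟨g, hg, rfl⟩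
      rw [hS, hS]
      conv_rhs => rw [← h]
      simp only [← Matrix.mulVec_mulVec]
      rw [Matrix.dotProduct_mulVec x, Matrix.vecMul_transpose]
    · intro h
      apply SO_mem L hconn hω hz hall
      ext i j
      have h1 : ∀ x y, QuadraticMap.polar (QuadraticMap.weightedSumSquares ℂ (sv ω)) ((g : Matrix n4 n4 ℂ) *ᵥ x) ((g : Matrix n4 n4 ℂ) *ᵥ y) = QuadraticMap.polar (QuadraticMap.weightedSumSquares ℂ (sv ω)) x y := by
        intro x y
        simp only [QuadraticMap.polar, ← Matrix.mulVec_add, h]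
      have h2 := h1 (Pi.single i 1) (Pi.single j 1)
      rw [hpol, hpol] at h2
      have h3 := mul_left_cancel₀ two_ne_zero h2
      simp only [Matrix.mulVec_single_one, Matrix.col_apply] at h3
      rw [Matrix.mul_apply]
      simp only [Matrix.mul_diagonal, transpose_apply]
      trans ∑ k, sv ω k * g k i * g k j
      · exact Finset.sum_congr rfl fun k _ => by ring
      · rw [h3]
        by_cases hij : i = j
        · subst hij
          rw [Finset.sum_eq_single i] <;> simp +contextual
        · rw [diagonal_apply_ne _ hij]
          refine Finset.sum_eq_zero fun k _ => ?_
          by_cases hk : k = i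
          · subst hk; simp [hij]
          · simp [hk]
end trans

/-- If `F` is a connected semisimple algebraic subgroup of `SL(4,ℂ)` acting irreducibly
on `ℂ⁴` with `H ⊊ F ⊊ SL(4,ℂ)`, where `H = SO(2,1,ℂ) × {1}`, then `F = SO(S,ℂ)` for some
nondegenerate quadratic form `S` on `ℂ⁴`. -/
theorem stmt_16 (F : Subgroup (Matrix.SpecialLinearGroup n4 ℂ))
    (halg : IsAlgebraicSubgroup F)
    (hconn : IsConnectedSubgroup F)
    (hss : IsSemisimpleSubgroup F)
    (hirr : ∀ W : Submodule ℂ (n4 → ℂ),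
      (∀ g ∈ F, ∀ x ∈ W, (g : Matrix n4 n4 ℂ).mulVec x ∈ W) → W = ⊥ ∨ W = ⊤)
    (hHF : ∀ g : Matrix.SpecialLinearGroup n4 ℂ,
      (∃ A : Matrix (Fin 3) (Fin 3) ℂ, A.det = 1 ∧ (∀ v, q3 (A.mulVec v) = q3 v) ∧
        (g : Matrix n4 n4 ℂ) = Matrix.fromBlocks A 0 0 1) → g ∈ F)
    (hHne : ∃ g ∈ F, ¬ ∃ A : Matrix (Fin 3) (Fin 3) ℂ, A.det = 1 ∧
        (∀ v, q3 (A.mulVec v) = q3 v) ∧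
        (g : Matrix n4 n4 ℂ) = Matrix.fromBlocks A 0 0 1)
    (hFne : F ≠ ⊤) :
    ∃ S : QuadraticForm ℂ (n4 → ℂ),
      (∀ x : n4 → ℂ, (∀ y, QuadraticMap.polar S x y = 0) → x = 0) ∧
      ∀ g : Matrix.SpecialLinearGroup n4 ℂ,
        g ∈ F ↔ ∀ x : n4 → ℂ, S ((g : Matrix n4 n4 ℂ).mulVec x) = S x := by
  obtain ⟨f, hf, hconj, hbr⟩ := exists_lie halg
  have hH : ∀ A : Matrix (Fin 3) (Fin 3) ℂ, A.det = 1 → Aᵀ * J3 * A = J3 → InF F (fromBlocks A 0 0 1) := by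
    intro A h1 h2
    exact ⟨⟨fromBlocks A 0 0 1, by rw [det_fromBlocks_zero₂₁, h1]; simp⟩, hHF _ ⟨A, h1, q3_of_J3 A h2, rfl⟩, rfl⟩
  have L : LieData F f := ⟨hf, hconj, hbr, hH, lie_h hf hH⟩
  rcases trichotomy f with h | h | ⟨h1, h2⟩ | ⟨ω, hω, hz, hall⟩
  · exact (caseA L hirr h).elim
  · exact (caseB L hirr h).elim
  · exact (caseC L h1 h2 hFne).elim
  · exact final L hconn hω hz hall
end
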